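/- (Watanabe–Yoshida, Huneke–Yao) Let (A, 𝔪) be a d-dimensional complete Noetherian local ring of prime characteristic p that is unmixed, i.e., dim A/𝔭 = d for every associated prime 𝔭 of A. Then A is a regular local ring if and only if e_HK(A) = 1, where e_HK(A) = lim_{e→∞} ℓ_A(A/𝔪^{[p^e]})/p^{ed}. -/

import Mathlib

open IsLocalRing Filter Topology
open scoped TensorProduct

/-- The Frobenius bracket power `I^{[q]}`: the ideal generated by `q`-th powers of elements of `I`. -/
def Ideal.bracketPow {R : Type*} [CommRing R] (I : Ideal R) (q : ℕ) : Ideal R :=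
  Ideal.span ((fun a => a ^ q) '' (I : Set R))

/-- `R°`: the set of elements of `R` not contained in any minimal prime ideal. -/
def ringCirc (R : Type*) [CommRing R] : Set R :=
  {c | ∀ P ∈ minimalPrimes R, c ∉ P}

/-- The tight closure of an ideal `I` in a ring of characteristic `p`:
`x ∈ I^*` iff there is `c ∈ R°` with `c * x ^ (p ^ e) ∈ I^{[p^e]}` for all sufficiently
large `e`. -/
def tightClosure {R : Type*} [CommRing R] (p : ℕ) (I : Ideal R) : Set R :=
  {x | ∃ c ∈ ringCirc R, ∃ N : ℕ, ∀ e : ℕ, N ≤ e → c * x ^ p ^ e ∈ I.bracketPow (p ^ e)}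

/-- `x` is integral over the ideal `J`: there are `n ≥ 1` and `aᵢ ∈ Jⁱ` with
`x ^ n + a₁ x ^ (n-1) + ⋯ + aₙ = 0`. -/
def IsIntegralOverIdeal {R : Type*} [CommRing R] (J : Ideal R) (x : R) : Prop :=
  ∃ n : ℕ, 0 < n ∧ ∃ a : ℕ → R, (∀ i ∈ Finset.Icc 1 n, a i ∈ J ^ i) ∧
    x ^ n + ∑ i ∈ Finset.Icc 1 n, a i * x ^ (n - i) = 0

/-- `R` is F-finite: `F_*R` is a finitely generated `R`-module, i.e. there is a finite set
of generators `s` such that every element of `R` is an `R`-linear combination of elements of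
`s` with respect to the Frobenius-twisted action `r • b = r ^ p * b`. -/
def FFinite (R : Type*) [CommRing R] (p : ℕ) : Prop :=
  ∃ s : Finset R, ∀ x : R, ∃ a : R → R, x = ∑ b ∈ s, a b ^ p * b

/-- The map `cF^e : R → F^e_* R`, `x ↦ c * x ^ (p ^ e)`, splits as an `R`-module
homomorphism: there is an additive `φ : R → R` with `φ (r ^ (p ^ e) * x) = r * φ x`
for all `r, x` and `φ c = 1`. -/
def FrobSplitsWith {R : Type*} [CommRing R] (p : ℕ) (c : R) (e : ℕ) : Prop :=
  ∃ φ : R →+ R, (∀ r x : R, φ (r ^ p ^ e * x) = r * φ x) ∧ φ c = 1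

/-- `R` is strongly F-regular: F-finite, reduced, and for every `c ∈ R°` some `cF^e` splits. -/
def StronglyFRegular (R : Type*) [CommRing R] (p : ℕ) : Prop :=
  FFinite R p ∧ IsReduced R ∧ ∀ c ∈ ringCirc R, ∃ e : ℕ, FrobSplitsWith p c e

/-- `R` is F-pure: the Frobenius map `R → F_* R` splits as an `R`-module homomorphism. -/
def FPure (R : Type*) [CommRing R] (p : ℕ) : Prop :=
  ∃ φ : R →+ R, (∀ r x : R, φ (r ^ p * x) = r * φ x) ∧ φ 1 = 1

/-- A regular local ring: a Noetherian local ring whose maximal ideal can be generated by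
`dim R` elements. -/
def IsRegularLocal (R : Type*) [CommRing R] [IsLocalRing R] : Prop :=
  IsNoetherianRing R ∧ ∃ (d : ℕ) (x : Fin d → R),
    ringKrullDim R = d ∧ IsLocalRing.maximalIdeal R = Ideal.span (Set.range x)

/-- The height of an ideal: the infimum of the heights of the primes containing it. -/
noncomputable def idealHeight {R : Type*} [CommRing R] (I : Ideal R) : ℕ∞ :=
  ⨅ (P : PrimeSpectrum R) (_ : I ≤ P.asIdeal), Order.height P

/-- A parameter ideal: an ideal generated by `ht I` elements. -/
def IsParameterIdeal {R : Type*} [CommRing R] (I : Ideal R) : Prop :=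
  ∃ n : ℕ, idealHeight I = n ∧ ∃ x : Fin n → R, I = Ideal.span (Set.range x)

/-- A local ring is F-rational if every parameter ideal is tightly closed. -/
def FRationalLocal (R : Type*) [CommRing R] [IsLocalRing R] (p : ℕ) : Prop :=
  ∀ I : Ideal R, IsParameterIdeal I → tightClosure p I = ↑I

/-- A Cohen–Macaulay local ring: every full system of parameters `x₁, …, x_d`
(`d = dim B`) is a regular sequence, i.e. `(x₁, …, xᵢ) : xᵢ₊₁ = (x₁, …, xᵢ)`. -/
def IsCohenMacaulayLocalRing (B : Type*) [CommRing B] [IsLocalRing B] : Prop :=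
  ∀ d : ℕ, ringKrullDim B = d →
    ∀ x : Fin d → B, (∀ i, x i ∈ IsLocalRing.maximalIdeal B) →
      (Ideal.span (Set.range x)).radical = IsLocalRing.maximalIdeal B →
      ∀ i : Fin d,
        Submodule.colon (Ideal.span (x '' {j | (j : ℕ) < (i : ℕ)})) (Ideal.span {x i}) =
          Ideal.span (x '' {j | (j : ℕ) < (i : ℕ)})

/-- The length `ℓ_R M` of a module, as an extended natural number: the supremum of the
lengths of chains of submodules below `⊤`. -/
noncomputable def moduleLength (R M : Type*) [Ring R] [AddCommGroup M] [Module R M] : ℕ∞ :=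
  Order.height (⊤ : Submodule R M)

/-- The Frobenius endomorphism `x ↦ x ^ p`, as a ring homomorphism, in prime
characteristic `p`. -/
noncomputable def frobeniusRingHom (R : Type*) [CommRing R] (p : ℕ) [Fact p.Prime] [CharP R p] :
    R →+* R :=
  frobenius R p

/-!
For a parameter `x` and an ideal `J`, replace `J` by `(J : x^∞) + (x)`; iterating over a system of
`d` parameters, starting from the zero ideal, gives a limit ideal `I` whose colength `ℓ(R/I)` is
the multiplicity of the system.  Raising the parameters to the power `q` multiplies the
multiplicity by `q ^ d`, and `I^[q]` lies in the new limit ideal, so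
`q ^ d * ℓ(R/I) ≤ ℓ(R/I^[q])`.  Unmixedness and completeness (through Chevalley's theorem) place
such an `I` inside any prescribed `𝔪`-primary ideal `K`.  In the other direction, filtering by
copies of the residue field gives `ℓ(R/I^[q]) - ℓ(R/K^[q]) ≤ ℓ(K/I) * ℓ(R/𝔪^[q])` and
`ℓ(R/K^[q]) ≤ ℓ(R/K) * ℓ(R/𝔪^[q])`.  If `e_HK = 1`, these bounds force
`ℓ(R/K^[q]) / q ^ d → ℓ(R/K)`, and replacing `K` by `K^[p]` gives `ℓ(R/K^[p]) = p ^ d * ℓ(R/K)`.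
For `K = 𝔪` and `K = 𝔪 ^ 2` this says that the `p`-th powers of a minimal system of `n` generators
of `𝔪` are independent in the sense of Lech, whence `p ^ n = ℓ(R/𝔪^[p]) = p ^ d` and `n = d`.
-/

universe u v

section Saturation

variable {R M : Type*} [CommRing R] [AddCommGroup M] [Module R M]

/-- The saturation `N :_M z^∞` of a submodule `N` of `M` with respect to a ring element `z`. -/
def saturation (N : Submodule R M) (z : R) : Submodule R M :=
  ⨆ n : ℕ, N.comap (LinearMap.lsmul R M (z ^ n))

theorem monotone_comap_lsmul_pow (N : Submodule R M) (z : R) :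
    Monotone fun n : ℕ => N.comap (LinearMap.lsmul R M (z ^ n)) := by
  refine monotone_nat_of_le_succ fun n m hm => ?_
  simpa only [Submodule.mem_comap, LinearMap.lsmul_apply, pow_succ', mul_smul]
    using N.smul_mem z hm

theorem mem_saturation {N : Submodule R M} {z : R} {m : M} :
    m ∈ saturation N z ↔ ∃ n : ℕ, z ^ n • m ∈ N :=
  Submodule.mem_iSup_of_directed _ (monotone_comap_lsmul_pow N z).directed_le

theorem le_saturation (N : Submodule R M) (z : R) : N ≤ saturation N z :=
  fun m hm => mem_saturation.2 ⟨0, by rwa [pow_zero, one_smul]⟩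

theorem saturation_mono {N N' : Submodule R M} (h : N ≤ N') (z : R) :
    saturation N z ≤ saturation N' z :=
  iSup_mono fun _ => Submodule.comap_mono h

theorem saturation_pow (N : Submodule R M) (z : R) {n : ℕ} (hn : n ≠ 0) :
    saturation N (z ^ n) = saturation N z := by
  ext m
  simp only [mem_saturation, ← pow_mul]
  refine ⟨fun ⟨k, hk⟩ => ⟨n * k, hk⟩, fun ⟨k, hk⟩ => ⟨k, ?_⟩⟩
  exact monotone_comap_lsmul_pow N z (Nat.le_mul_of_pos_left k (Nat.pos_of_ne_zero hn)) hk

theorem exists_saturation_eq_comap [IsNoetherian R M] (N : Submodule R M) (z : R) :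
    ∃ n : ℕ, saturation N z = N.comap (LinearMap.lsmul R M (z ^ n)) :=
  ⟨_, WellFoundedGT.iSup_eq_monotonicSequenceLimit ⟨_, monotone_comap_lsmul_pow N z⟩⟩

theorem saturation_eq_self {N : Submodule R M} {z : R} (hz : IsSMulRegular (M ⧸ N) z) :
    saturation N z = N := by
  refine le_antisymm (fun m hm => ?_) (le_saturation N z)
  obtain ⟨n, hn⟩ := mem_saturation.1 hm
  rw [← Submodule.Quotient.mk_eq_zero, Submodule.Quotient.mk_smul] at hn
  exact (Submodule.Quotient.mk_eq_zero N).1 ((hz.pow n).right_eq_zero_of_smul hn)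

theorem isSMulRegular_quotient_saturation (N : Submodule R M) (z : R) :
    IsSMulRegular (M ⧸ saturation N z) z := by
  refine isSMulRegular_iff_right_eq_zero_of_smul.2 fun m hm => ?_
  obtain ⟨m, rfl⟩ := Submodule.mkQ_surjective _ m
  rw [← map_smul, Submodule.mkQ_apply, Submodule.Quotient.mk_eq_zero, mem_saturation] at hm
  obtain ⟨n, hn⟩ := hm
  rw [Submodule.mkQ_apply, Submodule.Quotient.mk_eq_zero, mem_saturation]
  exact ⟨n + 1, by rwa [pow_succ, mul_smul]⟩

end Saturation

/-! ### Exact sequences attached to multiplication by an element -/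

section ExactSequences

open scoped Pointwise

variable {R A B C : Type*} [CommRing R] [AddCommGroup A] [Module R A]
  [AddCommGroup B] [Module R B] [AddCommGroup C] [Module R C]

/-- The map `0 :_A x → 0 :_B x` induced by a linear map `A → B`. -/
def torsionByMap (x : R) (f : A →ₗ[R] B) :
    Submodule.torsionBy R A x →ₗ[R] Submodule.torsionBy R B x :=
  f.restrict fun a (ha : x • a = 0) => show x • f a = 0 by rw [← map_smul, ha, map_zero]

theorem torsionByMap_injective (x : R) {f : A →ₗ[R] B} (hf : Function.Injective f) :
    Function.Injective (torsionByMap x f) :=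
  fun _ _ h => Subtype.ext (hf (congrArg Subtype.val h))

theorem torsionByMap_exact (x : R) {f : A →ₗ[R] B} {g : B →ₗ[R] C} (hf : Function.Injective f)
    (hfg : Function.Exact f g) : Function.Exact (torsionByMap x f) (torsionByMap x g) := by
  rintro ⟨b, hb⟩
  constructor
  · intro h
    obtain ⟨a, rfl⟩ := (hfg b).1 (congrArg Subtype.val h)
    have ha : x • a = 0 := hf (by rw [map_smul, map_zero]; exact hb)
    exact ⟨⟨a, ha⟩, rfl⟩
  · rintro ⟨a, h⟩
    rw [← h]
    exact Subtype.ext (hfg.apply_apply_eq_zero _)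

theorem exact_torsionBy_subtype_lsmul (x : R) (A : Type*) [AddCommGroup A] [Module R A] :
    Function.Exact (Submodule.torsionBy R A x).subtype (LinearMap.lsmul R A x) :=
  LinearMap.exact_subtype_ker_map _

theorem exact_lsmul_mkQ (x : R) (A : Type*) [AddCommGroup A] [Module R A] :
    Function.Exact (LinearMap.lsmul R A x) (x • (⊤ : Submodule R A)).mkQ := fun a => by
  simp [Submodule.mem_smul_pointwise_iff_exists]

theorem exists_snake_torsionBy_quotSMulTop (x : R) {f : A →ₗ[R] B} {g : B →ₗ[R] C}
    (hf : Function.Injective f) (hfg : Function.Exact f g) (hg : Function.Surjective g) :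
    ∃ δ : Submodule.torsionBy R C x →ₗ[R] QuotSMulTop x A,
      Function.Exact (torsionByMap x g) δ ∧ Function.Exact δ (QuotSMulTop.map x f) := by
  have hAB : f ∘ₗ LinearMap.lsmul R A x = LinearMap.lsmul R B x ∘ₗ f := by ext; simp
  have hBC : g ∘ₗ LinearMap.lsmul R B x = LinearMap.lsmul R C x ∘ₗ g := by ext; simp
  have exact_ker_B := exact_torsionBy_subtype_lsmul x B
  have exact_ker_C := exact_torsionBy_subtype_lsmul x C
  have exact_coker_A := exact_lsmul_mkQ x A
  have exact_coker_B := exact_lsmul_mkQ x B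
  exact ⟨SnakeLemma.δ' _ _ _ f g hfg f g hfg hAB hBC _ exact_ker_C _ exact_coker_A hg hf,
    SnakeLemma.exact_δ'_right _ _ _ f g hfg f g hfg hAB hBC _ exact_ker_B _ exact_ker_C
      _ exact_coker_A hg hf (torsionByMap x g) rfl (Submodule.subtype_injective _),
    SnakeLemma.exact_δ'_left _ _ _ f g hfg f g hfg hAB hBC _ exact_ker_C _ exact_coker_A
      _ exact_coker_B hg hf (QuotSMulTop.map x f) rfl (Submodule.mkQ_surjective _)⟩

/-- Multiplication by `x`, as a map `M/yM → M/xyM`. -/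
def quotSMulTopMul (x y : R) (A : Type*) [AddCommGroup A] [Module R A] :
    QuotSMulTop y A →ₗ[R] QuotSMulTop (x * y) A :=
  Submodule.mapQ _ _ (LinearMap.lsmul R A x) <| by
    rintro _ ⟨a, -, rfl⟩
    exact ⟨a, trivial, mul_smul x y a⟩

theorem mul_smul_top_le (x y : R) : (x * y) • (⊤ : Submodule R A) ≤ x • ⊤ := by
  rintro _ ⟨a, -, rfl⟩
  exact ⟨y • a, trivial, (mul_smul x y a).symm⟩

/-- The projection `M/xyM → M/xM`. -/
def quotSMulTopFactor (x y : R) (A : Type*) [AddCommGroup A] [Module R A] :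
    QuotSMulTop (x * y) A →ₗ[R] QuotSMulTop x A :=
  Submodule.factor (mul_smul_top_le x y)

theorem quotSMulTopMul_injective {x : R} (hx : IsSMulRegular A x) (y : R) :
    Function.Injective (quotSMulTopMul x y A) := by
  rw [← LinearMap.ker_eq_bot, LinearMap.ker_eq_bot']
  intro m hm
  obtain ⟨m, rfl⟩ := Submodule.mkQ_surjective _ m
  obtain ⟨a, -, ha⟩ := (Submodule.Quotient.mk_eq_zero _).1 hm
  refine (Submodule.Quotient.mk_eq_zero _).2 ⟨a, trivial, hx ?_⟩
  exact (mul_smul x y a).symm.trans ha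

theorem quotSMulTopMul_exact (x y : R) :
    Function.Exact (quotSMulTopMul x y A) (quotSMulTopFactor x y A) := by
  intro m
  obtain ⟨m, rfl⟩ := Submodule.mkQ_surjective _ m
  constructor
  · intro hm
    obtain ⟨a, -, ha⟩ := (Submodule.Quotient.mk_eq_zero _).1 hm
    exact ⟨Submodule.mkQ _ a, congrArg (Submodule.mkQ _) ha⟩
  · rintro ⟨a, ha⟩
    obtain ⟨a, rfl⟩ := Submodule.mkQ_surjective _ a
    rw [← ha]
    exact (Submodule.Quotient.mk_eq_zero _).2 ⟨a, trivial, rfl⟩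

theorem quotSMulTopFactor_surjective (x y : R) : Function.Surjective (quotSMulTopFactor x y A) :=
  Submodule.factor_surjective (mul_smul_top_le x y)

end ExactSequences

/-! ### The multiplicity symbol -/

section MultiplicitySymbol

open scoped Pointwise

variable {R : Type u} [CommRing R]

/-- Northcott's multiplicity symbol `e(x₁, …, xₙ | M)`, defined by recursion on `n` through
`e(x₁, …, xₙ | M) = e(x₂, …, xₙ | M / x₁M) - e(x₂, …, xₙ | 0 :_M x₁)`; it is meaningful when
`x₁, …, xₙ` is a multiplicity system on `M`. -/
noncomputable def multiplicitySymbol :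
    List R → (M : Type v) → [AddCommGroup M] → [Module R M] → ℤ
  | [], M, _, _ => (Module.length R M).toNat
  | x :: xs, M, _, _ =>
      multiplicitySymbol xs (QuotSMulTop x M) - multiplicitySymbol xs (Submodule.torsionBy R M x)

/-- `xs` is a multiplicity system on `M`: over a Noetherian ring and for finitely generated `M`
this says that `M / (xs)M` has finite length, phrased through the support of that module. -/
def IsMultiplicitySystem (xs : List R) (M : Type v) [AddCommGroup M] [Module R M] : Prop :=
  ∀ P : Ideal R, P.IsPrime → (∀ x ∈ xs, x ∈ P) → Module.annihilator R M ≤ P → P.IsMaximal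

namespace IsMultiplicitySystem

variable {x : R} {xs : List R} {M : Type v} {N : Type*} [AddCommGroup M] [Module R M]
  [AddCommGroup N] [Module R N]

theorem of_injective (h : IsMultiplicitySystem xs M) {f : N →ₗ[R] M} (hf : Function.Injective f) :
    IsMultiplicitySystem xs N := fun P hP hxs hann =>
  h P hP hxs ((LinearMap.annihilator_le_of_injective f hf).trans hann)

theorem of_surjective (h : IsMultiplicitySystem xs M) {f : M →ₗ[R] N}
    (hf : Function.Surjective f) : IsMultiplicitySystem xs N := fun P hP hxs hann =>
  h P hP hxs ((LinearMap.annihilator_le_of_surjective f hf).trans hann)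

theorem submodule (h : IsMultiplicitySystem xs M) (K : Submodule R M) :
    IsMultiplicitySystem xs K :=
  h.of_injective K.subtype_injective

theorem quotient (h : IsMultiplicitySystem xs M) (K : Submodule R M) :
    IsMultiplicitySystem xs (M ⧸ K) :=
  h.of_surjective K.mkQ_surjective

theorem of_cons (h : IsMultiplicitySystem (x :: xs) M) (hx : x ∈ Module.annihilator R M) :
    IsMultiplicitySystem xs M := fun P hP hxs hann =>
  h P hP (List.forall_mem_cons.2 ⟨hann hx, hxs⟩) hann

theorem quotSMulTop (h : IsMultiplicitySystem (x :: xs) M) :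
    IsMultiplicitySystem xs (QuotSMulTop x M) :=
  (h.quotient _).of_cons (QuotSMulTop.mem_annihilator M x)

theorem torsionBy (h : IsMultiplicitySystem (x :: xs) M) :
    IsMultiplicitySystem xs (Submodule.torsionBy R M x) :=
  (h.submodule _).of_cons (Module.mem_annihilator.2 fun m => Submodule.smul_torsionBy x m)

theorem pow_cons (h : IsMultiplicitySystem (x :: xs) M) (n : ℕ) :
    IsMultiplicitySystem (x ^ n :: xs) M := fun P hP hxs hann =>
  have hxs := List.forall_mem_cons.1 hxs
  h P hP (List.forall_mem_cons.2 ⟨hP.mem_of_pow_mem n hxs.1, hxs.2⟩) hann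

theorem map_pow (h : IsMultiplicitySystem xs M) (n : ℕ) :
    IsMultiplicitySystem (xs.map (· ^ n)) M := fun P hP hxs hann =>
  h P hP (fun _ hy => hP.mem_of_pow_mem n (hxs _ (List.mem_map_of_mem hy))) hann

theorem length_ne_top [IsNoetherianRing R] [IsNoetherian R M]
    (h : IsMultiplicitySystem ([] : List R) M) : Module.length R M ≠ ⊤ := by
  let I := Module.annihilator R M
  have maximal_of_prime (P : Ideal (R ⧸ I)) (hP : P.IsPrime) : P.IsMaximal := by
    have hle : I ≤ P.comap (Ideal.Quotient.mk I) :=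
      Ideal.mk_ker.symm.trans_le (Ideal.comap_mono bot_le)
    have := h _ (hP.comap _) (by simp) hle
    rw [← P.map_comap_of_surjective _ Ideal.Quotient.mk_surjective]
    exact Ideal.IsMaximal.map_of_surjective_of_ker_le Ideal.Quotient.mk_surjective
      (Ideal.mk_ker.trans_le hle)
  have : IsArtinianRing (R ⧸ I) := isArtinianRing_iff_isNoetherianRing_krullDimLE_zero.2
    ⟨inferInstance, Ring.krullDimLE_zero_iff.2 maximal_of_prime⟩
  let : Module (R ⧸ I) M := (Module.isTorsionBySet_annihilator R M).module
  have : IsScalarTower R (R ⧸ I) M :=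
    Module.IsTorsionBySet.isScalarTower (Module.isTorsionBySet_annihilator R M)
  have : Module.Finite (R ⧸ I) M := Module.Finite.of_restrictScalars_finite R _ M
  have : IsArtinian R M :=
    isArtinian_of_surjective_algebraMap (R := R ⧸ I) Ideal.Quotient.mk_surjective
  exact Module.length_ne_top

end IsMultiplicitySystem

theorem alternating_sum_of_exact
    {χ : (M : Type v) → [AddCommGroup M] → [Module R M] → ℤ}
    {C : (M : Type v) → [AddCommGroup M] → [Module R M] → Prop}
    (hχ : ∀ (M₁ M₂ M₃ : Type v) [AddCommGroup M₁] [Module R M₁] [AddCommGroup M₂] [Module R M₂]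
      [AddCommGroup M₃] [Module R M₃] (f : M₁ →ₗ[R] M₂) (g : M₂ →ₗ[R] M₃), C M₂ →
      Function.Injective f → Function.Exact f g → Function.Surjective g → χ M₂ = χ M₁ + χ M₃)
    {M₁ M₂ M₃ M₄ M₅ M₆ : Type v} [AddCommGroup M₁] [Module R M₁] [AddCommGroup M₂] [Module R M₂]
    [AddCommGroup M₃] [Module R M₃] [AddCommGroup M₄] [Module R M₄] [AddCommGroup M₅] [Module R M₅]
    [AddCommGroup M₆] [Module R M₆] {f₁ : M₁ →ₗ[R] M₂} {f₂ : M₂ →ₗ[R] M₃} {f₃ : M₃ →ₗ[R] M₄}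
    {f₄ : M₄ →ₗ[R] M₅} {f₅ : M₅ →ₗ[R] M₆} (hM₂ : C M₂) (hM₃ : C M₃) (hM₄ : C M₄) (hM₅ : C M₅)
    (h₁ : Function.Injective f₁) (h₁₂ : Function.Exact f₁ f₂) (h₂₃ : Function.Exact f₂ f₃)
    (h₃₄ : Function.Exact f₃ f₄) (h₄₅ : Function.Exact f₄ f₅) (h₅ : Function.Surjective f₅) :
    χ M₁ - χ M₂ + χ M₃ - χ M₄ + χ M₅ - χ M₆ = 0 := by
  have exact_range {X Y Z : Type v} [AddCommGroup X] [Module R X] [AddCommGroup Y] [Module R Y]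
      [AddCommGroup Z] [Module R Z] {f : X →ₗ[R] Y} {g : Y →ₗ[R] Z} (hfg : Function.Exact f g) :
      Function.Exact (LinearMap.range f).subtype g := fun y => by simpa using hfg y
  have exact_rangeRestrict {X Y Z : Type v} [AddCommGroup X] [Module R X] [AddCommGroup Y]
      [Module R Y] [AddCommGroup Z] [Module R Z] {f : X →ₗ[R] Y} {g : Y →ₗ[R] Z}
      (hfg : Function.Exact f g) : Function.Exact f g.rangeRestrict := fun y => by
    simpa [Subtype.ext_iff] using hfg y
  have e₂ := hχ _ _ _ f₁ f₂.rangeRestrict hM₂ h₁ (exact_rangeRestrict h₁₂)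
    f₂.surjective_rangeRestrict
  have e₃ := hχ _ _ _ (LinearMap.range f₂).subtype f₃.rangeRestrict hM₃
    (Submodule.subtype_injective _) (exact_rangeRestrict (exact_range h₂₃))
    f₃.surjective_rangeRestrict
  have e₄ := hχ _ _ _ (LinearMap.range f₃).subtype f₄.rangeRestrict hM₄
    (Submodule.subtype_injective _) (exact_rangeRestrict (exact_range h₃₄))
    f₄.surjective_rangeRestrict
  have e₅ := hχ _ _ _ (LinearMap.range f₄).subtype f₅ hM₅ (Submodule.subtype_injective _)
    (exact_range h₄₅) h₅
  linarith

variable [IsNoetherianRing R]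

theorem multiplicitySymbol_eq_add_of_exact (xs : List R) {A B C : Type v} [AddCommGroup A]
    [Module R A] [AddCommGroup B] [Module R B] [AddCommGroup C] [Module R C] [IsNoetherian R B]
    {f : A →ₗ[R] B} {g : B →ₗ[R] C} (hB : IsMultiplicitySystem xs B) (hf : Function.Injective f)
    (hfg : Function.Exact f g) (hg : Function.Surjective g) :
    multiplicitySymbol xs B = multiplicitySymbol xs A + multiplicitySymbol xs C := by
  induction xs generalizing A B C with
  | nil =>
    have : IsNoetherian R A := isNoetherian_of_injective f hf
    have : IsNoetherian R C := isNoetherian_of_surjective g (LinearMap.range_eq_top.2 hg)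
    simp only [multiplicitySymbol, Module.length_eq_add_of_exact f g hf hg hfg]
    rw [ENat.toNat_add (hB.of_injective hf).length_ne_top (hB.of_surjective hg).length_ne_top,
      Nat.cast_add]
  | cons x xs ih =>
    have : IsNoetherian R A := isNoetherian_of_injective f hf
    have : IsNoetherian R C := isNoetherian_of_surjective g (LinearMap.range_eq_top.2 hg)
    obtain ⟨δ, hδ, hδ'⟩ := exists_snake_torsionBy_quotSMulTop x hf hfg hg
    have := alternating_sum_of_exact (χ := fun M => multiplicitySymbol xs M)
      (C := fun M => IsNoetherian R M ∧ IsMultiplicitySystem xs M)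
      (fun _ _ _ _ _ _ _ _ _ f g h hf hfg hg => have := h.1; ih h.2 hf hfg hg)
      ⟨inferInstance, hB.torsionBy⟩ ⟨inferInstance, (hB.of_surjective hg).torsionBy⟩
      ⟨inferInstance, (hB.of_injective hf).quotSMulTop⟩ ⟨inferInstance, hB.quotSMulTop⟩
      (torsionByMap_injective x hf) (torsionByMap_exact x hf hfg) hδ hδ'
      (QuotSMulTop.map_exact x hfg hg) (QuotSMulTop.map_surjective x hg)
    simp only [multiplicitySymbol]
    linarith

theorem multiplicitySymbol_of_subsingleton (xs : List R) (M : Type v) [AddCommGroup M]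
    [Module R M] [Subsingleton M] : multiplicitySymbol xs M = 0 := by
  have hM : IsMultiplicitySystem xs M := fun P hP _ hann =>
    absurd (top_le_iff.1 ((Module.annihilator_eq_top_iff.2 ‹_›).symm.trans_le hann)) hP.ne_top
  have := multiplicitySymbol_eq_add_of_exact xs (f := (0 : M →ₗ[R] M)) (g := (0 : M →ₗ[R] M)) hM
    (Function.injective_of_subsingleton _)
    (fun m => ⟨fun _ => ⟨0, Subsingleton.elim _ _⟩, fun _ => rfl⟩)
    (fun m => ⟨0, Subsingleton.elim _ _⟩)
  linarith

variable {x : R} {xs : List R} {M N : Type v} [AddCommGroup M] [Module R M] [AddCommGroup N]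
  [Module R N]

theorem multiplicitySymbol_cons_of_isSMulRegular (xs : List R) (hx : IsSMulRegular M x) :
    multiplicitySymbol (x :: xs) M = multiplicitySymbol xs (QuotSMulTop x M) := by
  have : Subsingleton (Submodule.torsionBy R M x) := by
    rw [(isSMulRegular_iff_torsionBy_eq_bot M x).1 hx]
    infer_instance
  rw [multiplicitySymbol, multiplicitySymbol_of_subsingleton xs (Submodule.torsionBy R M x),
    sub_zero]

variable [IsNoetherian R M]

theorem multiplicitySymbol_eq_ker_add (hM : IsMultiplicitySystem xs M) {g : M →ₗ[R] N}
    (hg : Function.Surjective g) :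
    multiplicitySymbol xs M = multiplicitySymbol xs (LinearMap.ker g) + multiplicitySymbol xs N :=
  multiplicitySymbol_eq_add_of_exact xs hM (Submodule.subtype_injective _)
    (LinearMap.exact_subtype_ker_map g) hg

theorem multiplicitySymbol_congr (hM : IsMultiplicitySystem xs M) (e : M ≃ₗ[R] N) :
    multiplicitySymbol xs M = multiplicitySymbol xs N := by
  have : Subsingleton (LinearMap.ker e.toLinearMap) := by rw [e.ker]; infer_instance
  rw [multiplicitySymbol_eq_ker_add hM (g := e.toLinearMap) e.surjective,
    multiplicitySymbol_of_subsingleton, zero_add]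

theorem multiplicitySymbol_cons_of_isTorsionBy (hM : IsMultiplicitySystem (x :: xs) M)
    (hx : Module.IsTorsionBy R M x) : multiplicitySymbol (x :: xs) M = 0 := by
  have hM : IsMultiplicitySystem xs M :=
    hM.of_cons ((Module.isTorsionBy_iff_mem_annihilator R M).1 hx)
  have smul_top : x • (⊤ : Submodule R M) = ⊥ :=
    eq_bot_iff.2 fun _ ⟨m, _, hm⟩ => (Submodule.mem_bot R).2 (hm.symm.trans (@hx m))
  rw [multiplicitySymbol,
    ← multiplicitySymbol_congr hM (Submodule.quotEquivOfEqBot _ smul_top).symm,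
    ← multiplicitySymbol_congr hM (LinearEquiv.ofTop _
      ((Module.isTorsionBy_iff_torsionBy_eq_top x).1 hx)).symm, sub_self]

theorem multiplicitySymbol_cons_of_isTorsionBy_pow (hM : IsMultiplicitySystem (x :: xs) M) (n : ℕ)
    (hx : Module.IsTorsionBy R M (x ^ n)) : multiplicitySymbol (x :: xs) M = 0 := by
  induction n generalizing M with
  | zero =>
    have : Subsingleton M := subsingleton_of_forall_eq 0 fun m => by simpa using @hx m
    exact multiplicitySymbol_of_subsingleton _ _
  | succ n ih =>
    let g := (LinearMap.lsmul R M x).rangeRestrict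
    have torsion_ker : Module.IsTorsionBy R (LinearMap.ker g) x := fun m =>
      Subtype.ext (congrArg Subtype.val m.2 :)
    have torsion_range :
        Module.IsTorsionBy R (LinearMap.range (LinearMap.lsmul R M x)) (x ^ n) := by
      rintro ⟨_, m, rfl⟩
      exact Subtype.ext (by simpa [pow_succ, mul_smul] using @hx m)
    rw [multiplicitySymbol_eq_ker_add hM (g := g) (LinearMap.surjective_rangeRestrict _),
      multiplicitySymbol_cons_of_isTorsionBy (hM.submodule _) torsion_ker,
      ih (hM.submodule _) torsion_range, add_zero]

theorem multiplicitySymbol_cons_eq_of_surjective (hM : IsMultiplicitySystem (x :: xs) M)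
    {g : M →ₗ[R] N} (hg : Function.Surjective g) (hker : LinearMap.ker g ≤ saturation ⊥ x) :
    multiplicitySymbol (x :: xs) M = multiplicitySymbol (x :: xs) N := by
  obtain ⟨n, hn⟩ := exists_saturation_eq_comap (⊥ : Submodule R M) x
  rw [multiplicitySymbol_eq_ker_add hM hg,
    multiplicitySymbol_cons_of_isTorsionBy_pow (hM.submodule _) n, zero_add]
  exact fun m => Subtype.ext ((Submodule.mem_bot R).1 (hn.le (hker m.2) :))

theorem multiplicitySymbol_cons_quotient_saturation (hM : IsMultiplicitySystem (x :: xs) M) :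
    multiplicitySymbol (x :: xs) (M ⧸ saturation (⊥ : Submodule R M) x) =
      multiplicitySymbol (x :: xs) M :=
  (multiplicitySymbol_cons_eq_of_surjective hM (Submodule.mkQ_surjective _)
    (Submodule.ker_mkQ _).le).symm

theorem multiplicitySymbol_nonneg (hM : IsMultiplicitySystem xs M) :
    0 ≤ multiplicitySymbol xs M := by
  induction xs generalizing M with
  | nil => exact Int.natCast_nonneg _
  | cons x xs ih =>
    rw [← multiplicitySymbol_cons_quotient_saturation hM,
      multiplicitySymbol_cons_of_isSMulRegular _ (isSMulRegular_quotient_saturation _ x)]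
    exact ih (hM.quotient _).quotSMulTop

theorem multiplicitySymbol_quotSMulTop_pow (hx : IsSMulRegular M x)
    (hM : IsMultiplicitySystem (x :: xs) M) (n : ℕ) :
    multiplicitySymbol xs (QuotSMulTop (x ^ n) M) =
      n * multiplicitySymbol xs (QuotSMulTop x M) := by
  induction n with
  | zero =>
    have : Subsingleton (QuotSMulTop (x ^ 0) M) :=
      Submodule.Quotient.subsingleton_iff.2 (by rw [pow_zero, one_smul])
    rw [multiplicitySymbol_of_subsingleton, Nat.cast_zero, zero_mul]
  | succ n ih =>
    have hM' : IsMultiplicitySystem xs (QuotSMulTop (x * x ^ n) M) := by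
      rw [← pow_succ']
      exact (hM.pow_cons (n + 1)).quotSMulTop
    rw [pow_succ', multiplicitySymbol_eq_add_of_exact xs hM'
      (quotSMulTopMul_injective hx (x ^ n)) (quotSMulTopMul_exact x (x ^ n))
      (quotSMulTopFactor_surjective x (x ^ n)), ih]
    push_cast
    ring

theorem multiplicitySymbol_pow_cons (hM : IsMultiplicitySystem (x :: xs) M) {n : ℕ} (hn : n ≠ 0) :
    multiplicitySymbol (x ^ n :: xs) M = n * multiplicitySymbol (x :: xs) M := by
  have hx := isSMulRegular_quotient_saturation (⊥ : Submodule R M) x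
  rw [← multiplicitySymbol_cons_quotient_saturation hM,
    ← multiplicitySymbol_cons_quotient_saturation (hM.pow_cons n), saturation_pow _ _ hn,
    multiplicitySymbol_cons_of_isSMulRegular _ (hx.pow n),
    multiplicitySymbol_cons_of_isSMulRegular _ hx,
    multiplicitySymbol_quotSMulTop_pow hx (hM.quotient _)]

theorem multiplicitySymbol_map_pow (hM : IsMultiplicitySystem xs M) {n : ℕ} (hn : n ≠ 0) :
    multiplicitySymbol (xs.map (· ^ n)) M = (n : ℤ) ^ xs.length * multiplicitySymbol xs M := by
  induction xs generalizing M with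
  | nil => rw [List.map_nil, List.length_nil, pow_zero, one_mul]
  | cons x xs ih =>
    have hM' : IsMultiplicitySystem (x :: xs.map (· ^ n)) M := fun P hP hxs hann =>
      have hxs := List.forall_mem_cons.1 hxs
      hM P hP (List.forall_mem_cons.2 ⟨hxs.1, fun y hy =>
        hP.mem_of_pow_mem n (hxs.2 _ (List.mem_map_of_mem hy))⟩) hann
    rw [List.map_cons, multiplicitySymbol_pow_cons hM' hn, multiplicitySymbol, multiplicitySymbol,
      ih hM.quotSMulTop, ih hM.torsionBy, List.length_cons]
    ring

end MultiplicitySymbol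

/-! ### Limit ideals -/

/-- The length of `R ⧸ I` as an `R`-module. -/
noncomputable def colength {R : Type*} [CommRing R] (I : Ideal R) : ℕ∞ :=
  Module.length R (R ⧸ I)

section LimitIdeal

open scoped Pointwise

variable {R : Type u} [CommRing R]

/-- The ideal obtained from `a` by repeatedly saturating with respect to, and then adjoining, the
successive entries of a list. For a multiplicity system `xs` on `R ⧸ a` its colength is the
multiplicity symbol of `xs` on `R ⧸ a`. -/
def limitIdeal : List R → Ideal R → Ideal R
  | [], a => a
  | x :: xs, a => limitIdeal xs (saturation a x ⊔ Ideal.span {x})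

theorem le_limitIdeal (xs : List R) (a : Ideal R) : a ≤ limitIdeal xs a := by
  induction xs generalizing a with
  | nil => exact le_rfl
  | cons x xs ih => exact (le_saturation a x).trans (le_sup_left.trans (ih _))

theorem mem_limitIdeal {xs : List R} {x : R} (hx : x ∈ xs) (a : Ideal R) :
    x ∈ limitIdeal xs a := by
  induction xs generalizing a with
  | nil => exact absurd hx List.not_mem_nil
  | cons y xs ih =>
    rcases List.mem_cons.1 hx with rfl | hx
    · exact le_limitIdeal xs _ (Ideal.mem_sup_right (Ideal.mem_span_singleton_self x))
    · exact ih hx _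

/-- `(R/a) / x(R/a)` is `R / (a + (x))`. -/
noncomputable def quotSMulTopQuotientEquiv (a : Ideal R) (x : R) :
    QuotSMulTop x (R ⧸ a) ≃ₗ[R] R ⧸ (a ⊔ Ideal.span {x}) :=
  (Submodule.quotEquivOfEq _ (Submodule.map a.mkQ (Ideal.span {x})) <| by
    rw [← a.range_mkQ, LinearMap.range_eq_map, ← Submodule.map_pointwise_smul,
      ← Submodule.ideal_span_singleton_smul, smul_eq_mul, Ideal.mul_top]) ≪≫ₗ
    Submodule.quotientQuotientEquivQuotientSup a (Ideal.span {x})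

theorem ker_factor_le_saturation_bot {a b : Ideal R} (hab : a ≤ b) {x : R}
    (hb : b ≤ saturation a x) :
    LinearMap.ker (Submodule.factor hab) ≤ saturation (⊥ : Submodule R (R ⧸ a)) x := by
  rintro ⟨r⟩ hr
  obtain ⟨n, hn⟩ := mem_saturation.1 (hb ((Submodule.Quotient.mk_eq_zero b).1 hr))
  exact mem_saturation.2 ⟨n, (Submodule.Quotient.mk_eq_zero a).2 hn⟩

theorem map_saturation_le {S : Type*} [CommRing S] (φ : R →+* S) (a : Ideal R) (x : R) :
    Ideal.map φ (saturation a x) ≤ saturation (a.map φ) (φ x) := by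
  refine Ideal.map_le_iff_le_comap.2 fun r hr => ?_
  obtain ⟨n, hn⟩ := mem_saturation.1 hr
  exact mem_saturation.2 ⟨n, by simpa using Ideal.mem_map_of_mem φ hn⟩

theorem multiplicitySymbol_quotient_eq_colength_limitIdeal [IsNoetherianRing R] {xs : List R}
    {a : Ideal R} (h : IsMultiplicitySystem xs (R ⧸ a)) :
    multiplicitySymbol xs (R ⧸ a) = (colength (limitIdeal xs a)).toNat := by
  induction xs generalizing a with
  | nil => rfl
  | cons x xs ih =>
    have surj := Submodule.factor_surjective (le_saturation a x)
    have h' := (h.of_surjective surj).quotSMulTop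
    have e := quotSMulTopQuotientEquiv (saturation a x) x
    rw [multiplicitySymbol_cons_eq_of_surjective h surj (ker_factor_le_saturation_bot _ le_rfl),
      multiplicitySymbol_cons_of_isSMulRegular _ (isSMulRegular_quotient_saturation a x),
      multiplicitySymbol_congr h' e, ih (h'.of_surjective e.surjective), limitIdeal]

theorem multiplicitySymbol_map_le_colength_map_limitIdeal {S : Type*} [CommRing S]
    [IsNoetherianRing S] (φ : R →+* S) {xs : List R} {a : Ideal R}
    (h : IsMultiplicitySystem (xs.map φ) (S ⧸ a.map φ)) :
    multiplicitySymbol (xs.map φ) (S ⧸ a.map φ) ≤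
      (colength ((limitIdeal xs a).map φ)).toNat := by
  induction xs generalizing a with
  | nil => exact le_rfl
  | cons x xs ih =>
    have hle : a.map φ ≤ Ideal.map φ (saturation a x) := Ideal.map_mono (le_saturation a x)
    have h' := h.of_surjective (Submodule.factor_surjective hle)
    have e : QuotSMulTop (φ x) (S ⧸ Ideal.map φ (saturation a x)) ≃ₗ[S]
        S ⧸ Ideal.map φ (saturation a x ⊔ Ideal.span {x}) :=
      (quotSMulTopQuotientEquiv _ _).trans <| Submodule.quotEquivOfEq _ _ <| by
        rw [Ideal.map_sup, Ideal.map_span, Set.image_singleton]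
    calc multiplicitySymbol (φ x :: xs.map φ) (S ⧸ a.map φ)
        = multiplicitySymbol (φ x :: xs.map φ) (S ⧸ Ideal.map φ (saturation a x)) :=
          multiplicitySymbol_cons_eq_of_surjective h (Submodule.factor_surjective hle)
            (ker_factor_le_saturation_bot hle (map_saturation_le φ a x))
      _ ≤ multiplicitySymbol (xs.map φ) (QuotSMulTop (φ x) (S ⧸ Ideal.map φ (saturation a x))) :=
          sub_le_self _ (multiplicitySymbol_nonneg h'.torsionBy)
      _ = multiplicitySymbol (xs.map φ) (S ⧸ Ideal.map φ (saturation a x ⊔ Ideal.span {x})) :=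
          multiplicitySymbol_congr h'.quotSMulTop e
      _ ≤ (colength ((limitIdeal (x :: xs) a).map φ)).toNat :=
          ih (h'.quotSMulTop.of_surjective e.surjective)

theorem pow_mul_colength_limitIdeal_le [IsNoetherianRing R] {xs : List R}
    (h : IsMultiplicitySystem xs (R ⧸ (⊥ : Ideal R))) (φ : R →+* R) {q : ℕ} (hq : q ≠ 0)
    (hφ : ∀ x ∈ xs, φ x = x ^ q) :
    q ^ xs.length * (colength (limitIdeal xs ⊥)).toNat ≤
      (colength ((limitIdeal xs ⊥).map φ)).toNat := by
  have map_eq : xs.map φ = xs.map (· ^ q) := List.map_congr_left hφ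
  have h' : IsMultiplicitySystem (xs.map φ) (R ⧸ (⊥ : Ideal R).map φ) := by
    rw [map_eq, Ideal.map_bot]
    exact h.map_pow q
  have := multiplicitySymbol_map_le_colength_map_limitIdeal φ h'
  rw [map_eq, Ideal.map_bot, multiplicitySymbol_map_pow h hq,
    multiplicitySymbol_quotient_eq_colength_limitIdeal h] at this
  exact_mod_cast this

end LimitIdeal

/-! ### Colengths of ideals -/

section Colength

variable {R : Type*} [CommRing R]

theorem mapQ_comap_injective {M N : Type*} [AddCommGroup M] [Module R M] [AddCommGroup N]
    [Module R N] (f : M →ₗ[R] N) (q : Submodule R N) :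
    Function.Injective ((q.comap f).mapQ q f le_rfl) := by
  rw [← LinearMap.ker_eq_bot, Submodule.ker_mapQ, Submodule.mkQ_map_self]

theorem length_quotient_eq_sup_range_add_comap {M N : Type*} [AddCommGroup M] [Module R M]
    [AddCommGroup N] [Module R N] (f : M →ₗ[R] N) (q : Submodule R N) :
    Module.length R (N ⧸ q) =
      Module.length R (N ⧸ q ⊔ LinearMap.range f) + Module.length R (M ⧸ q.comap f) := by
  have exact : Function.Exact ((q.comap f).mapQ q f le_rfl)
      (Submodule.factor (le_sup_left : q ≤ q ⊔ LinearMap.range f)) := by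
    rw [LinearMap.exact_iff, Submodule.range_mapQ, Submodule.ker_mapQ, Submodule.comap_id,
      Submodule.map_sup, Submodule.mkQ_map_self, bot_sup_eq]
  rw [add_comm]
  exact Module.length_eq_add_of_exact _ _ (mapQ_comap_injective f q)
    (Submodule.factor_surjective _) exact

theorem colength_antitone : Antitone (colength (R := R)) := fun _ _ h =>
  Module.length_le_of_surjective (Submodule.factor h) (Submodule.factor_surjective h)

theorem colength_top : colength (⊤ : Ideal R) = 0 :=
  Module.length_eq_zero_iff.2 (Ideal.Quotient.subsingleton_iff.2 rfl)

theorem colength_maximalIdeal [IsLocalRing R] : colength (maximalIdeal R) = 1 :=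
  Module.length_eq_one_iff.2 (isSimpleModule_iff_isCoatom.2 (maximalIdeal.isMaximal R).out)

theorem colength_eq_sup_add_colon (I : Ideal R) (g : R) :
    colength I = colength (I ⊔ Ideal.span {g}) + colength (I.colon {g}) := by
  have colon_eq : I.colon {g} = Submodule.comap (LinearMap.toSpanSingleton R R g) I := by
    ext
    exact Submodule.mem_colon_singleton
  rw [colon_eq, Ideal.span, ← LinearMap.range_toSpanSingleton g]
  exact length_quotient_eq_sup_range_add_comap _ I

theorem colength_le_sup_add {I C : Ideal R} {g : R} (h : C ≤ I.colon {g}) :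
    colength I ≤ colength (I ⊔ Ideal.span {g}) + colength C := by
  rw [colength_eq_sup_add_colon I g]
  gcongr
  exact colength_antitone h

theorem colength_sup_span_pow_le (I : Ideal R) (u : R) (k : ℕ) :
    colength (I ⊔ Ideal.span {u ^ k}) ≤ k * colength (I ⊔ Ideal.span {u}) := by
  induction k with
  | zero => simp [colength_top]
  | succ k ih =>
    have le_colon : I ⊔ Ideal.span {u ^ k} ≤ (I ⊔ Ideal.span {u ^ (k + 1)}).colon {u} := by
      refine sup_le (le_sup_left.trans Ideal.le_colon) ?_
      rw [Ideal.span_singleton_le_iff_mem, Submodule.mem_colon_singleton, smul_eq_mul, ← pow_succ]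
      exact Ideal.mem_sup_right (Ideal.mem_span_singleton_self _)
    calc colength (I ⊔ Ideal.span {u ^ (k + 1)})
        ≤ colength (I ⊔ Ideal.span {u ^ (k + 1)} ⊔ Ideal.span {u}) +
            colength (I ⊔ Ideal.span {u ^ k}) := colength_le_sup_add le_colon
      _ ≤ colength (I ⊔ Ideal.span {u}) + k * colength (I ⊔ Ideal.span {u}) :=
          add_le_add (colength_antitone (sup_le_sup_right le_sup_left _)) ih
      _ = (k + 1 : ℕ) * colength (I ⊔ Ideal.span {u}) := by
          rw [Nat.cast_succ, add_mul, one_mul, add_comm]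

theorem colength_ne_top [IsLocalRing R] [IsNoetherianRing R] {I : Ideal R}
    (hI : maximalIdeal R ≤ I.radical) : colength I ≠ ⊤ := by
  have : IsMultiplicitySystem ([] : List R) (R ⧸ I) := fun P hP _ hann => by
    rw [Ideal.annihilator_quotient] at hann
    have le_P := hI.trans (hP.isRadical.radical_le_iff.2 hann)
    rw [← (maximalIdeal.isMaximal R).eq_of_le hP.ne_top le_P]
    exact maximalIdeal.isMaximal R
  exact this.length_ne_top

theorem exists_colon_eq_maximalIdeal [IsLocalRing R] [IsNoetherianRing R] {I K : Ideal R}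
    (hI : maximalIdeal R ≤ I.radical) (hIK : I < K) : ∃ u ∈ K, I.colon {u} = maximalIdeal R := by
  obtain ⟨s, hs⟩ := Ideal.exists_pow_le_of_le_radical_of_fg hI (IsNoetherian.noetherian _)
  have hex : ∃ t, K * maximalIdeal R ^ t ≤ I := ⟨s, Ideal.mul_le_right.trans hs⟩
  classical
  obtain ⟨t, ht⟩ : ∃ t, Nat.find hex = t + 1 := Nat.exists_eq_succ_of_ne_zero fun h0 => by
    have := Nat.find_spec hex
    rw [h0, pow_zero, Ideal.one_eq_top, Ideal.mul_top] at this
    exact hIK.not_ge this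
  obtain ⟨u, hu, huI⟩ := SetLike.not_le_iff_exists.1 (Nat.find_min hex (m := t) (by lia))
  refine ⟨u, Ideal.mul_le_left hu, ((maximalIdeal.isMaximal R).eq_of_le ?_ fun r hr => ?_).symm⟩
  · rwa [Ne, Submodule.colon_eq_top_iff_subset, Set.singleton_subset_iff]
  · rw [Submodule.mem_colon_singleton, smul_eq_mul, mul_comm]
    refine Nat.find_spec hex ?_
    rw [ht, pow_succ, ← mul_assoc]
    exact Ideal.mul_mem_mul hu hr

-- Passing from `K` down to `I` in `ℓ(K / I)` steps, each step costs `R ⧸ m` in `R` and at most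
-- `S ⧸ mS` in `S`; sums replace differences because `ℕ∞` has no honest subtraction.
theorem colength_map_add_le [IsLocalRing R] [IsNoetherianRing R] {S : Type*} [CommRing S]
    (φ : R →+* S) {I K : Ideal R} (hI : maximalIdeal R ≤ I.radical) (hIK : I ≤ K) :
    colength (I.map φ) + colength K * colength ((maximalIdeal R).map φ) ≤
      colength (K.map φ) + colength I * colength ((maximalIdeal R).map φ) := by
  induction I using WellFoundedGT.induction with
  | ind I ih =>
  rcases hIK.eq_or_lt with rfl | hlt
  · exact le_rfl
  set c := colength ((maximalIdeal R).map φ)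
  obtain ⟨u, huK, hu⟩ := exists_colon_eq_maximalIdeal hI hlt
  have hIu : I < I ⊔ Ideal.span {u} := by
    refine left_lt_sup.2 fun h => (maximalIdeal.isMaximal R).ne_top ?_
    rw [← hu, Submodule.colon_eq_top_iff_subset, Set.singleton_subset_iff]
    exact (Ideal.span_singleton_le_iff_mem I).1 h
  have step := ih _ hIu (hI.trans (Ideal.radical_mono hIu.le))
    (sup_le hIK ((Ideal.span_singleton_le_iff_mem K).2 huK))
  have step_le : colength (I.map φ) ≤ colength ((I ⊔ Ideal.span {u}).map φ) + c := by
    rw [Ideal.map_sup, Ideal.map_span, Set.image_singleton]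
    refine colength_le_sup_add (Ideal.map_le_iff_le_comap.2 fun r hr => ?_)
    rw [← hu, Submodule.mem_colon_singleton, smul_eq_mul] at hr
    rw [Ideal.mem_comap, Submodule.mem_colon_singleton, smul_eq_mul, ← map_mul]
    exact Ideal.mem_map_of_mem φ hr
  calc colength (I.map φ) + colength K * c
      ≤ colength ((I ⊔ Ideal.span {u}).map φ) + c + colength K * c := add_le_add_left step_le _
    _ = colength ((I ⊔ Ideal.span {u}).map φ) + colength K * c + c := add_right_comm ..
    _ ≤ colength (K.map φ) + colength (I ⊔ Ideal.span {u}) * c + c := add_le_add_left step _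
    _ = colength (K.map φ) + colength I * c := by
        rw [colength_eq_sup_add_colon I u, hu, colength_maximalIdeal, add_mul, one_mul, add_assoc]

theorem colength_map_le [IsLocalRing R] [IsNoetherianRing R] {S : Type*} [CommRing S]
    (φ : R →+* S) {I : Ideal R} (hI : maximalIdeal R ≤ I.radical) :
    colength (I.map φ) ≤ colength I * colength ((maximalIdeal R).map φ) := by
  simpa [colength_top, Ideal.map_top] using colength_map_add_le φ hI le_top

end Colength

/-! ### Lech independence -/

section LechIndependence

variable {R ι : Type*} [CommRing R]

/-- A family `f` is Lech independent if every linear relation among its members has all its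
coefficients in the ideal that `f` generates. -/
def IsLechIndependent [Fintype ι] (f : ι → R) : Prop :=
  ∀ a : ι → R, ∑ i, a i * f i = 0 → ∀ i, a i ∈ Ideal.span (Set.range f)

section Update

variable [DecidableEq ι] (f : ι → R) (i : ι) (g h u : R)

theorem span_range_update :
    Ideal.span (Set.range (Function.update f i g)) =
      Ideal.span (f '' {i}ᶜ) ⊔ Ideal.span {g} := by
  rw [← Ideal.span_union, ← Set.image_univ, ← Set.compl_union_self {i}, Set.image_union,
    Set.image_singleton, Function.update_self]
  congr 2
  exact Set.image_congr fun j hj => Function.update_of_ne hj g f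

theorem span_range_update_mul_sup_span :
    Ideal.span (Set.range (Function.update f i (g * h))) ⊔ Ideal.span {g} =
      Ideal.span (Set.range (Function.update f i g)) := by
  rw [span_range_update, span_range_update, sup_assoc,
    sup_eq_right.2 (Ideal.span_singleton_le_span_singleton.2 (dvd_mul_right g h))]

theorem span_range_update_mul_le :
    Ideal.span (Set.range (Function.update f i (g * h))) ≤
      Ideal.span (Set.range (Function.update f i h)) := by
  rw [span_range_update, span_range_update]
  exact sup_le_sup_left (Ideal.span_singleton_le_span_singleton.2 (dvd_mul_left h g)) _

theorem span_range_update_le_colon :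
    Ideal.span (Set.range (Function.update f i h)) ≤
      (Ideal.span (Set.range (Function.update f i (g * h)))).colon {g} := by
  rw [span_range_update, span_range_update]
  refine sup_le (le_sup_left.trans Ideal.le_colon) ?_
  rw [Ideal.span_singleton_le_iff_mem, Submodule.mem_colon_singleton, smul_eq_mul, mul_comm]
  exact Ideal.mem_sup_right (Ideal.mem_span_singleton_self _)

variable {f i g h} [Fintype ι]

theorem sum_update_mul_update (a : ι → R) (b : R) :
    ∑ j, Function.update a i b j * Function.update f i g j =
      b * g + ∑ j ∈ Finset.univ.erase i, a j * f j := by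
  rw [← Finset.add_sum_erase _ _ (Finset.mem_univ i), Function.update_self, Function.update_self]
  congr 1
  refine Finset.sum_congr rfl fun j hj => ?_
  rw [Function.update_of_ne (Finset.ne_of_mem_erase hj),
    Function.update_of_ne (Finset.ne_of_mem_erase hj)]

theorem IsLechIndependent.colon_eq (H : IsLechIndependent (Function.update f i (g * h))) :
    (Ideal.span (Set.range (Function.update f i (g * h)))).colon {g} =
      Ideal.span (Set.range (Function.update f i h)) := by
  refine le_antisymm (fun r hr => ?_) (span_range_update_le_colon f i g h)
  rw [Submodule.mem_colon_singleton, smul_eq_mul] at hr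
  obtain ⟨a, ha⟩ := Ideal.mem_span_range_iff_exists_fun.1 hr
  rw [← Function.update_eq_self i a, sum_update_mul_update] at ha
  -- the relation `r g = ∑ aⱼ fⱼ` times `h`, read as a relation between `g h` and the other `fⱼ`
  have mem := H (Function.update (fun j => -h * a j) i (r - a i * h)) (by
    simp only [sum_update_mul_update, mul_assoc, ← Finset.mul_sum]
    linear_combination (-h) * ha) i
  rw [Function.update_self] at mem
  have h_mem : h ∈ Ideal.span (Set.range (Function.update f i h)) := by
    rw [span_range_update]
    exact Ideal.mem_sup_right (Ideal.mem_span_singleton_self h)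
  simpa using Ideal.add_mem _ (span_range_update_mul_le f i g h mem)
    (Ideal.mul_mem_left _ (a i) h_mem)

theorem IsLechIndependent.update (H : IsLechIndependent (Function.update f i (g * h))) :
    IsLechIndependent (Function.update f i h) := by
  intro a ha j
  rw [← Function.update_eq_self i a, sum_update_mul_update] at ha
  have mem := H (Function.update (fun j => g * a j) i (a i)) (by
    simp only [sum_update_mul_update, mul_assoc, ← Finset.mul_sum]
    linear_combination g * ha) j
  rcases eq_or_ne j i with rfl | hj
  · rw [Function.update_self] at mem
    exact span_range_update_mul_le f j g h mem
  · rw [Function.update_of_ne hj, mul_comm g (a j)] at mem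
    exact H.colon_eq.le (Submodule.mem_colon_singleton.2 mem)

theorem IsLechIndependent.of_update_pow {k : ℕ} (hk : k ≠ 0)
    (H : IsLechIndependent (Function.update f i (u ^ k))) :
    IsLechIndependent (Function.update f i u) := by
  obtain ⟨k, rfl⟩ := Nat.exists_eq_succ_of_ne_zero hk
  rw [Nat.succ_eq_add_one, pow_succ] at H
  exact H.update

theorem colength_span_range_update_pow {k : ℕ}
    (H : IsLechIndependent (Function.update f i (u ^ k))) :
    colength (Ideal.span (Set.range (Function.update f i (u ^ k)))) =
      k * colength (Ideal.span (Set.range (Function.update f i u))) := by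
  induction k with
  | zero =>
    simp [span_range_update, colength_top]
  | succ k ih =>
    rw [pow_succ'] at H ⊢
    rw [colength_eq_sup_add_colon _ u, span_range_update_mul_sup_span, H.colon_eq, ih H.update,
      Nat.cast_succ, add_mul, one_mul, add_comm]

end Update

variable [Fintype ι] (x : ι → R) (c : ι → ℕ)

theorem colength_span_range_pow_le :
    colength (Ideal.span (Set.range fun i => x i ^ c i)) ≤
      (∏ i, c i : ℕ) * colength (Ideal.span (Set.range x)) := by
  classical
  suffices ∀ s : Finset ι, colength (Ideal.span (Set.range (s.piecewise (fun i => x i ^ c i) x))) ≤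
      (∏ i ∈ s, c i : ℕ) * colength (Ideal.span (Set.range x)) by
    simpa only [Finset.piecewise_univ] using this Finset.univ
  intro s
  induction s using Finset.induction_on with
  | empty => simp
  | insert i s hi ih =>
    rw [Finset.piecewise_insert, Finset.prod_insert hi, Nat.cast_mul, mul_assoc, span_range_update]
    refine (colength_sup_span_pow_le _ (x i) (c i)).trans (mul_le_mul_right ?_ _)
    rwa [← span_range_update, ← Finset.piecewise_eq_of_notMem s _ x hi, Function.update_eq_self]

theorem IsLechIndependent.colength_span_range_pow (hc : ∀ i, c i ≠ 0)
    (H : IsLechIndependent fun i => x i ^ c i) :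
    colength (Ideal.span (Set.range fun i => x i ^ c i)) =
      (∏ i, c i : ℕ) * colength (Ideal.span (Set.range x)) := by
  classical
  suffices ∀ s : Finset ι, IsLechIndependent (s.piecewise (fun i => x i ^ c i) x) →
      colength (Ideal.span (Set.range (s.piecewise (fun i => x i ^ c i) x))) =
        (∏ i ∈ s, c i : ℕ) * colength (Ideal.span (Set.range x)) by
    simpa only [Finset.piecewise_univ] using
      this Finset.univ (by simpa only [Finset.piecewise_univ] using H)
  intro s
  induction s using Finset.induction_on with
  | empty => simp
  | insert i s hi ih =>
    intro H
    rw [Finset.piecewise_insert] at H ⊢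
    have H' := H.of_update_pow (x i) (hc i)
    rw [colength_span_range_update_pow (x i) H, Finset.prod_insert hi, Nat.cast_mul, mul_assoc]
    rw [← Finset.piecewise_eq_of_notMem s (fun i => x i ^ c i) x hi, Function.update_eq_self]
      at H' ⊢
    rw [ih H']

theorem eq_of_length_quotient_le {M : Type*} [AddCommGroup M] [Module R M] {N N' : Submodule R M}
    (hN : Module.length R (M ⧸ N) ≠ ⊤) (h : N ≤ N')
    (hle : Module.length R (M ⧸ N) ≤ Module.length R (M ⧸ N')) : N = N' := by
  have : IsFiniteLength R (M ⧸ N) := Module.length_ne_top_iff.1 hN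
  obtain ⟨_, _⟩ := isFiniteLength_iff_isNoetherian_isArtinian.1 this
  by_contra hne
  have map_ne_bot : N'.map N.mkQ ≠ ⊥ := fun h0 => hne <| h.antisymm <| by
    rwa [← le_bot_iff, Submodule.map_le_iff_le_comap, Submodule.comap_bot, Submodule.ker_mkQ] at h0
  have := Submodule.length_quotient_lt _ map_ne_bot
  rw [(Submodule.quotientQuotientEquivQuotient N N' h).length_eq] at this
  exact this.not_ge hle

theorem isLechIndependent_of_le_colength_sq {f : ι → R} {Q : Ideal R}
    (hQ : Ideal.span (Set.range f) = Q) (hfin : colength Q ≠ ⊤)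
    (hle : (Fintype.card ι + 1) * colength Q ≤ colength (Q ^ 2)) : IsLechIndependent f := by
  classical
  let σ : (ι → R) →ₗ[R] R := Fintype.linearCombination R f
  have range_σ : LinearMap.range σ = Q := by rw [Fintype.range_linearCombination, ← hQ]
  let Qι : Submodule R (ι → R) := Submodule.pi Set.univ fun _ => Q
  have length_Qι : Module.length R ((ι → R) ⧸ Qι) = Fintype.card ι * colength Q := by
    rw [(Submodule.quotientPi fun _ : ι => (Q : Submodule R R)).length_eq, Module.length_pi]
    simp [colength]
  have Qι_le : Qι ≤ Submodule.comap σ (Q ^ 2) := fun a ha => Submodule.mem_comap.2 <| by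
    rw [Fintype.linearCombination_apply, pow_two]
    exact sum_mem fun i _ => Ideal.mul_mem_mul (ha i trivial)
      (hQ ▸ Ideal.subset_span (Set.mem_range_self i))
  have length_sq : colength (Q ^ 2) =
      colength Q + Module.length R ((ι → R) ⧸ Submodule.comap σ (Q ^ 2)) := by
    rw [colength, length_quotient_eq_sup_range_add_comap σ, range_σ,
      sup_eq_right.2 (Ideal.pow_le_self two_ne_zero), colength]
  have Qι_eq : Qι = Submodule.comap σ (Q ^ 2) := by
    refine eq_of_length_quotient_le ?_ Qι_le ?_
    · rw [length_Qι]
      exact WithTop.mul_ne_top (ENat.natCast_ne_top _) hfin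
    · rw [length_sq, add_mul, one_mul, add_comm] at hle
      rw [length_Qι]
      exact (ENat.add_le_add_iff_left hfin).1 hle
  intro a ha i
  have ha' : a ∈ Qι := Qι_eq ▸ by
    rw [Submodule.mem_comap, Fintype.linearCombination_apply]
    exact ha.symm ▸ zero_mem _
  exact hQ ▸ ha' i trivial

end LechIndependence

theorem colength_maximalIdeal_sq (R : Type*) [CommRing R] [IsLocalRing R] [IsNoetherianRing R] :
    colength (maximalIdeal R ^ 2) = (maximalIdeal R).spanFinrank + 1 := by
  have exact : Function.Exact (maximalIdeal R).cotangentToQuotientSquare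
      (Submodule.factor (Ideal.pow_le_self two_ne_zero : maximalIdeal R ^ 2 ≤ maximalIdeal R)) := by
    rw [LinearMap.exact_iff, Submodule.ker_mapQ, Submodule.comap_id,
      Ideal.range_cotangentToQuotientSquare]
    rfl
  have := Module.length_eq_add_of_exact _ _ (maximalIdeal R).cotangentToQuotientSquare_injective
    (Submodule.factor_surjective _) exact
  rw [colength, this, spanFinrank_maximalIdeal_eq_finrank_cotangentSpace,
    ← Module.length_eq_finrank, Module.length_eq_of_surjective residue_surjective]
  congr 1
  exact colength_maximalIdeal

/-! ### Chevalley's theorem -/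

section Chevalley

variable {R : Type*} [CommRing R]

theorem mem_of_forall_mem_sup_pow [IsNoetherianRing R] [IsLocalRing R] {I a : Ideal R} (hI : I ≠ ⊤)
    {x : R} (hx : ∀ n, x ∈ a ⊔ I ^ n) : x ∈ a := by
  suffices h : Ideal.Quotient.mk a x ∈ (⨅ n : ℕ, I ^ n • ⊤ : Submodule R (R ⧸ a)) by
    rwa [Ideal.iInf_pow_smul_eq_bot_of_isLocalRing I hI, Submodule.mem_bot,
      Ideal.Quotient.eq_zero_iff_mem] at h
  refine (Submodule.mem_iInf _).2 fun n => ?_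
  obtain ⟨y, hy, z, hz, rfl⟩ := Submodule.mem_sup.1 (hx n)
  have hyz : Ideal.Quotient.mk a (y + z) = z • (1 : R ⧸ a) := by
    rw [map_add, Ideal.Quotient.eq_zero_iff_mem.2 hy, zero_add, Algebra.smul_def, mul_one]
    rfl
  exact hyz ▸ Submodule.smul_mem_smul hz trivial

theorem exists_forall_sup_le_sup {M : Type*} [AddCommGroup M] [Module R M] {b : ℕ → Submodule R M}
    (hb : Antitone b) (N : Submodule R M) [IsArtinian R (M ⧸ N)] :
    ∃ n, ∀ k, b n ⊔ N ≤ b k ⊔ N := by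
  obtain ⟨n, hn⟩ := IsArtinian.monotone_stabilizes
    (⟨fun k => OrderDual.toDual ((b k).map N.mkQ), fun _ _ h => Submodule.map_mono (hb h)⟩ :
      ℕ →o (Submodule R (M ⧸ N))ᵒᵈ)
  refine ⟨n, fun k => ?_⟩
  rcases le_total n k with h | h
  · have hnk : (b n).map N.mkQ = (b k).map N.mkQ := hn k h
    have hcomap := congrArg (Submodule.comap N.mkQ) hnk
    rw [Submodule.comap_map_mkQ, Submodule.comap_map_mkQ, sup_comm, sup_comm N] at hcomap
    exact hcomap.le
  · exact sup_le_sup_right (hb h) N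

theorem isArtinian_quotient_maximalIdeal_pow [IsNoetherianRing R] [IsLocalRing R] (k : ℕ) :
    IsArtinian R (R ⧸ maximalIdeal R ^ k) :=
  have hfin : colength (maximalIdeal R ^ k) ≠ ⊤ :=
    colength_ne_top fun _ hx => ⟨k, Ideal.pow_mem_pow hx k⟩
  (isFiniteLength_iff_isNoetherian_isArtinian.1 (Module.length_ne_top_iff.1 hfin)).2

theorem exists_sub_mem_pow_forall_mem_sup_pow {I : Ideal R} [IsPrecomplete I R] {c : ℕ → Ideal R}
    (hc : ∀ k, c k ≤ c (k + 1) ⊔ I ^ k) {s : ℕ} {w : R} (hw : w ∈ c s) :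
    ∃ x, x - w ∈ I ^ s ∧ ∀ k, s ≤ k → x ∈ c k ⊔ I ^ k := by
  have lift_succ : ∀ k, ∀ v ∈ c k, ∃ v' ∈ c (k + 1), v - v' ∈ I ^ k := fun k v hv => by
    obtain ⟨v', hv', t, ht, rfl⟩ := Submodule.mem_sup.1 (hc k hv)
    exact ⟨v', hv', by rwa [add_sub_cancel_left]⟩
  choose! next next_mem sub_next_mem using lift_succ
  let f : ℕ → R := Nat.rec w fun j v => next (s + j) v
  have hf (j : ℕ) : f j ∈ c (s + j) := by
    induction j with
    | zero => exact hw
    | succ j ih => exact next_mem (s + j) (f j) ih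
  let g (k : ℕ) : R := f (k - s)
  have hg (k : ℕ) (hk : s ≤ k) : g k ∈ c k := by
    simpa only [Nat.add_sub_cancel' hk] using hf (k - s)
  have hg_sub (k : ℕ) : g k - g (k + 1) ∈ I ^ k := by
    rcases lt_or_ge k s with hk | hk
    · simp only [g, Nat.sub_eq_zero_of_le hk, Nat.sub_eq_zero_of_le hk.le, sub_self, zero_mem]
    · obtain ⟨j, rfl⟩ := Nat.exists_eq_add_of_le hk
      simp only [g, add_assoc, Nat.add_sub_cancel_left]
      exact sub_next_mem (s + j) (f j) (hf j)
  have hcauchy : AdicCompletion.IsAdicCauchy I R g :=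
    (AdicCompletion.isAdicCauchy_iff I R g).2 fun k => by
      rw [SModEq.sub_mem, smul_eq_mul, Ideal.mul_top]
      exact hg_sub k
  obtain ⟨x, hx⟩ := IsPrecomplete.prec' g hcauchy
  simp only [SModEq.sub_mem, smul_eq_mul, Ideal.mul_top] at hx
  refine ⟨x, ?_, fun k hk => ?_⟩
  · have hgs : g s = w := congrArg f (Nat.sub_self s)
    simpa only [hgs, neg_sub] using neg_mem (hx s)
  · rw [← sub_sub_cancel (g k) x]
    exact sub_mem (Ideal.mem_sup_left (hg k hk)) (Ideal.mem_sup_right (hx k))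

theorem exists_le_of_forall_mem [IsNoetherianRing R] [IsLocalRing R]
    [IsPrecomplete (maximalIdeal R) R] {b : ℕ → Ideal R} (hb : Antitone b) {K : Ideal R} {s : ℕ}
    (hs : maximalIdeal R ^ s ≤ K) (hK : ∀ w, (∀ n, w ∈ b n) → w ∈ K) : ∃ n, b n ≤ K := by
  let c (k : ℕ) : Ideal R := ⨅ n, b n ⊔ maximalIdeal R ^ k
  have exists_le (k : ℕ) : ∃ n, b n ≤ c k := by
    have := isArtinian_quotient_maximalIdeal_pow (R := R) k
    obtain ⟨n, hn⟩ := exists_forall_sup_le_sup hb (maximalIdeal R ^ k)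
    exact ⟨n, le_iInf fun j => le_sup_left.trans (hn j)⟩
  have hc (k : ℕ) : c k ≤ c (k + 1) ⊔ maximalIdeal R ^ k := by
    obtain ⟨n, hn⟩ := exists_le (k + 1)
    exact (iInf_le _ n).trans (sup_le_sup_right hn _)
  obtain ⟨n, hn⟩ := exists_le s
  refine ⟨n, fun w hw => ?_⟩
  obtain ⟨x, hxw, hx⟩ := exists_sub_mem_pow_forall_mem_sup_pow hc (hn hw)
  have hxK : x ∈ K := hK x fun j =>
    mem_of_forall_mem_sup_pow (maximalIdeal.isMaximal R).ne_top fun k =>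
      have hle : c (s + k) ⊔ maximalIdeal R ^ (s + k) ≤ b j ⊔ maximalIdeal R ^ k :=
        (sup_le (iInf_le (fun n => b n ⊔ maximalIdeal R ^ (s + k)) j) le_sup_right).trans
          (sup_le_sup_left (Ideal.pow_le_pow_right le_add_self) (b j))
      hle (hx (s + k) le_self_add)
  rw [← sub_sub_cancel x w]
  exact sub_mem hxK (hs hxw)

end Chevalley

/-! ### Coheights of primes and parameters -/

section Coheight

open Order (coheight)

variable {R : Type*} [CommRing R]

theorem ringKrullDim_quotient_asIdeal (P : PrimeSpectrum R) :
    ringKrullDim (R ⧸ P.asIdeal) = coheight P := by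
  rw [ringKrullDim_quotient, Order.coheight_eq_krullDim_Ici]
  rfl

variable [IsLocalRing R]

theorem eq_closedPoint_of_coheight_eq_zero {P : PrimeSpectrum R} (hP : coheight P = 0) :
    P = closedPoint R :=
  isMax_iff_eq_top.1 (Order.coheight_eq_zero.1 hP)

theorem exists_le_mem_asIdeal_of_coheight_eq [IsNoetherianRing R] {P : PrimeSpectrum R} {n : ℕ}
    (hP : coheight P = n + 1) {y : R} (hy : y ∈ maximalIdeal R) :
    ∃ Q, P ≤ Q ∧ y ∈ Q.asIdeal ∧ n ≤ coheight Q := by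
  obtain ⟨p, rfl, hp⟩ := Order.exists_series_of_coheight_eq_coe P (n := n + 1)
    (by exact_mod_cast hP)
  have hlast : p.last = closedPoint R := by
    refine eq_closedPoint_of_coheight_eq_zero
      ((Order.coheight_eq_index_of_length_eq_head_coheight ?_ (Fin.last _)).trans ?_)
    · rw [hP, hp]; rfl
    · rw [Fin.rev_last, Fin.val_zero, Nat.cast_zero]
  obtain ⟨q, hyq, hq, hhead, -⟩ := PrimeSpectrum.exist_ltSeries_mem_one_of_mem_last p (x := y)
    (by rwa [hlast])
  refine ⟨q 1, hhead ▸ q.head_le 1, hyq, ?_⟩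
  have hrev : ((1 : Fin (q.length + 1)).rev : ℕ) = n := by
    rw [Fin.val_rev, Fin.val_one', ← hq, hp, Nat.mod_eq_of_lt (by omega)]
    omega
  exact hrev ▸ Order.rev_index_le_coheight q 1

theorem exists_mem_maximalIdeal_forall_coheight_le [IsNoetherianRing R] {b : Ideal R} {n : ℕ}
    (hb : ∀ P : PrimeSpectrum R, b ≤ P.asIdeal → coheight P ≤ n + 1) {S : Set (PrimeSpectrum R)}
    (hS : S.Finite) (hSn : ∀ Q ∈ S, coheight Q ≤ n) :
    ∃ z ∈ maximalIdeal R, (∀ Q ∈ S, z ∈ Q.asIdeal) ∧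
      ∀ P : PrimeSpectrum R, b ≤ P.asIdeal → z ∈ P.asIdeal → coheight P ≤ n := by
  let T : Set (PrimeSpectrum R) := {P | b ≤ P.asIdeal ∧ coheight P = n + 1}
  have hT : T.Finite := by
    refine ((Ideal.finite_minimalPrimes_of_isNoetherianRing R b).preimage
      fun _ _ _ _ => PrimeSpectrum.ext).subset fun P ⟨hbP, hP⟩ =>
        ⟨⟨P.isPrime, hbP⟩, fun Q ⟨hQ, hbQ⟩ hQP => ?_⟩
    by_contra hPQ
    have hlt : coheight P < coheight (⟨Q, hQ⟩ : PrimeSpectrum R) :=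
      Order.coheight_strictAnti (lt_of_le_not_ge hQP hPQ) (hP ▸ ENat.natCast_lt_top (n + 1))
    exact (hb _ hbQ).not_gt (hP ▸ hlt)
  let I : Ideal R := (hS.insert (closedPoint R)).toFinset.inf PrimeSpectrum.asIdeal
  have hI : ∀ Q ∈ insert (closedPoint R) S, I ≤ Q.asIdeal := fun Q hQ =>
    Finset.inf_le ((hS.insert _).mem_toFinset.2 hQ)
  have hIT : ¬ (I : Set R) ⊆ ⋃ P ∈ T, P.asIdeal := by
    rw [Ideal.subset_union_prime_finite hT ⊤ ⊤ fun P _ _ _ => P.isPrime]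
    rintro ⟨P, ⟨-, hP⟩, hIP⟩
    obtain ⟨Q, hQ, hQP⟩ := (Ideal.IsPrime.inf_le' P.isPrime).1 hIP
    have hQn : coheight Q ≤ n := by
      rcases (hS.insert _).mem_toFinset.1 hQ with rfl | hQS
      · exact (Order.coheight_top (PrimeSpectrum R)).trans_le zero_le
      · exact hSn Q hQS
    exact (ENat.lt_natCast_add_one_iff.2 hQn).not_ge (hP ▸ Order.coheight_anti hQP)
  obtain ⟨z, hz, hzT⟩ := Set.not_subset.1 hIT
  refine ⟨z, hI _ (Set.mem_insert _ _) hz, fun Q hQ => hI Q (Set.mem_insert_of_mem _ hQ) hz, ?_⟩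
  exact fun P hbP hzP => ENat.lt_natCast_add_one_iff.1 <| (hb P hbP).lt_of_ne fun hP =>
    hzT (Set.mem_biUnion ⟨hbP, hP⟩ hzP)

end Coheight

/-! ### Systems of parameters with small limit ideal -/

section AssociatedPrimes

variable {R M : Type*} [CommRing R] [AddCommGroup M] [Module R M]

theorem isSMulRegular_iff_forall_notMem_associatedPrimes [IsNoetherianRing R] {z : R} :
    IsSMulRegular M z ↔ ∀ P ∈ associatedPrimes R M, z ∉ P := by
  have h := Set.ext_iff.1 (biUnion_associatedPrimes_eq_compl_regular R M) z
  simpa only [Set.mem_iUnion, SetLike.mem_coe, Set.mem_compl_iff, Set.mem_ofPred_eq, not_exists,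
    not_not] using (not_congr h).symm

theorem associatedPrimes_quotient_saturation_subset [IsNoetherian R M] (N : Submodule R M) (z : R) :
    associatedPrimes R (M ⧸ saturation N z) ⊆ associatedPrimes R (M ⧸ N) := by
  obtain ⟨n, hn⟩ := exists_saturation_eq_comap N z
  rw [hn]
  exact associatedPrimes.subset_of_injective (mapQ_comap_injective _ N)

theorem associatedPrimes_quotSMulTop_pow_subset {y : R} (hy : IsSMulRegular M y) (n : ℕ) :
    associatedPrimes R (QuotSMulTop (y ^ n) M) ⊆ associatedPrimes R (QuotSMulTop y M) := by
  induction n with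
  | zero =>
    have : Subsingleton (QuotSMulTop (y ^ 0) M) := by
      rw [pow_zero, QuotSMulTop, one_smul]
      infer_instance
    rw [associatedPrimes.eq_empty_of_subsingleton]
    exact Set.empty_subset _
  | succ n ih =>
    rw [pow_succ]
    exact (associatedPrimes.subset_union_of_exact (quotSMulTopMul_injective (hy.pow n) y)
      (quotSMulTopMul_exact (y ^ n) y)).trans (Set.union_subset le_rfl ih)

theorem associatedPrimes_quotient_sup_span_pow_subset {a : Ideal R} {y : R}
    (hy : IsSMulRegular (R ⧸ a) y) (n : ℕ) :
    associatedPrimes R (R ⧸ (a ⊔ Ideal.span {y ^ n})) ⊆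
      associatedPrimes R (R ⧸ (a ⊔ Ideal.span {y})) := by
  rw [← LinearEquiv.AssociatedPrimes.eq (quotSMulTopQuotientEquiv a (y ^ n)),
    ← LinearEquiv.AssociatedPrimes.eq (quotSMulTopQuotientEquiv a y)]
  exact associatedPrimes_quotSMulTop_pow_subset hy n

theorem le_of_mem_associatedPrimes_quotient {a P : Ideal R}
    (hP : P ∈ associatedPrimes R (R ⧸ a)) : a ≤ P := by
  have h := IsAssociatedPrime.annihilator_le hP
  rwa [Submodule.annihilator_top, Ideal.annihilator_quotient] at h

theorem exists_mem_associatedPrimes_quotient [IsNoetherianRing R] {a : Ideal R} {w : R}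
    (hw : w ∉ a) : ∃ P ∈ associatedPrimes R (R ⧸ a), ∀ r, r * w ∈ a → r ∈ P := by
  obtain ⟨P, hP, hle⟩ := exists_le_isAssociatedPrime_of_isNoetherianRing R (Ideal.Quotient.mk a w)
    (hw ∘ Ideal.Quotient.eq_zero_iff_mem.1)
  exact ⟨P, hP, fun r hr => hle <| Submodule.mem_colon_singleton.2 <|
    (Submodule.mem_bot R).2 (Ideal.Quotient.eq_zero_iff_mem.2 hr)⟩

end AssociatedPrimes

section Parameters

open Order (coheight)

variable {R : Type*} [CommRing R] [IsNoetherianRing R]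

theorem exists_notMem_mul_mem_of_forall_mem_saturation {a P : Ideal R} [P.IsPrime] {y z w : R}
    (hy : y ∈ P) (hz : z ∉ P) (hw : ∀ n, w ∈ saturation (a ⊔ Ideal.span {y ^ n}) z) :
    ∃ t ∉ P, t * w ∈ a := by
  let S := Localization.AtPrime P
  have : IsNoetherianRing S := IsLocalization.isNoetherianRing P.primeCompl S inferInstance
  have hzS : IsUnit (algebraMap R S z) := IsLocalization.map_units S (⟨z, hz⟩ : P.primeCompl)
  have hyS : Ideal.span {algebraMap R S y} ≠ ⊤ := fun h =>
    (IsLocalization.AtPrime.isUnit_to_map_iff S P y).1 (Ideal.span_singleton_eq_top.1 h) hy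
  have hwS : algebraMap R S w ∈ a.map (algebraMap R S) := by
    refine mem_of_forall_mem_sup_pow hyS fun n => ?_
    obtain ⟨k, hk⟩ := mem_saturation.1 (hw n)
    have hmap := Ideal.mem_map_of_mem (algebraMap R S) hk
    rwa [smul_eq_mul, map_mul, map_pow, Ideal.unit_mul_mem_iff_mem _ (hzS.pow k), Ideal.map_sup,
      Ideal.map_span, Set.image_singleton, map_pow, ← Ideal.span_singleton_pow] at hmap
  obtain ⟨t, ht, htw⟩ :=
    (IsLocalization.algebraMap_mem_map_algebraMap_iff P.primeCompl S a w).1 hwS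
  exact ⟨t, ht, htw⟩

variable [IsLocalRing R]

theorem exists_saturation_sup_span_pow_le [IsPrecomplete (maximalIdeal R) R] {a K : Ideal R}
    {y z : R} (haK : a ≤ K) (hK : maximalIdeal R ≤ K.radical)
    (h : ∀ Q ∈ associatedPrimes R (R ⧸ a),
      ∃ P : PrimeSpectrum R, Q ≤ P.asIdeal ∧ y ∈ P.asIdeal ∧ z ∉ P.asIdeal) :
    ∃ n, saturation (a ⊔ Ideal.span {y ^ (n + 1)}) z ≤ K := by
  obtain ⟨s, hs⟩ := Ideal.exists_pow_le_of_le_radical_of_fg hK (IsNoetherian.noetherian _)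
  have hanti : Antitone fun n => saturation (a ⊔ Ideal.span {y ^ n}) z := fun i j hij =>
    saturation_mono (sup_le_sup_left
      (Ideal.span_singleton_le_span_singleton.2 (pow_dvd_pow y hij)) a) z
  obtain ⟨n, hn⟩ := exists_le_of_forall_mem hanti hs fun w hw => haK <| by
    by_contra hwa
    obtain ⟨Q, hQ, hQw⟩ := exists_mem_associatedPrimes_quotient hwa
    obtain ⟨P, hQP, hyP, hzP⟩ := h Q hQ
    obtain ⟨t, htP, htw⟩ := exists_notMem_mul_mem_of_forall_mem_saturation hyP hzP hw
    exact htP (hQP (hQw t htw))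
  exact ⟨n, (hanti n.le_succ).trans hn⟩

theorem exists_next_parameter [IsPrecomplete (maximalIdeal R) R] {a b K : Ideal R} {e : ℕ} {y : R}
    (hy : y ∈ maximalIdeal R) (hya : IsSMulRegular (R ⧸ a) y) (hba : b ≤ a) (haK : a ≤ K)
    (hK : maximalIdeal R ≤ K.radical)
    (ha : ∀ P : PrimeSpectrum R, P.asIdeal ∈ associatedPrimes R (R ⧸ a) →
      coheight P = (e + 1 : ℕ) + 1)
    (hb : ∀ P : PrimeSpectrum R, b ≤ P.asIdeal → y ∈ P.asIdeal → coheight P ≤ (e + 1 : ℕ)) :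
    ∃ z ∈ maximalIdeal R, ∃ n, saturation (a ⊔ Ideal.span {y ^ (n + 1)}) z ≤ K ∧
      (∀ P : PrimeSpectrum R, P.asIdeal ∈ associatedPrimes R
        (R ⧸ saturation (a ⊔ Ideal.span {y ^ (n + 1)}) z) → coheight P = e + 1) ∧
      ∀ P : PrimeSpectrum R, b ≤ P.asIdeal → y ∈ P.asIdeal → z ∈ P.asIdeal → coheight P ≤ e := by
  let S : Set (PrimeSpectrum R) :=
    {P | P.asIdeal ∈ associatedPrimes R (R ⧸ (a ⊔ Ideal.span {y})) ∧ coheight P ≤ e}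
  have hS : S.Finite := ((associatedPrimes.finite R _).preimage
    fun _ _ _ _ => PrimeSpectrum.ext).subset fun P hP => hP.1
  have hby (P : PrimeSpectrum R) (hP : b ⊔ Ideal.span {y} ≤ P.asIdeal) :
      coheight P ≤ (e + 1 : ℕ) :=
    hb P (le_sup_left.trans hP) ((Ideal.span_singleton_le_iff_mem _).1 (le_sup_right.trans hP))
  obtain ⟨z, hz, hzS, hzb⟩ := exists_mem_maximalIdeal_forall_coheight_le hby hS fun P hP => hP.2
  replace hzb (P : PrimeSpectrum R) (hbP : b ≤ P.asIdeal) (hyP : y ∈ P.asIdeal) :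
      z ∈ P.asIdeal → coheight P ≤ e :=
    hzb P (sup_le hbP ((Ideal.span_singleton_le_iff_mem _).2 hyP))
  obtain ⟨n, hn⟩ := exists_saturation_sup_span_pow_le (y := y) (z := z) haK hK fun Q hQ => by
    obtain ⟨P, hQP, hyP, hP⟩ :=
      exists_le_mem_asIdeal_of_coheight_eq (ha ⟨Q, hQ.isPrime⟩ hQ) hy
    refine ⟨P, hQP, hyP, fun hzP => ?_⟩
    have hbP : b ≤ P.asIdeal := hba.trans ((le_of_mem_associatedPrimes_quotient hQ).trans hQP)
    exact (Nat.lt_succ_self e).not_ge (Nat.cast_le.1 (hP.trans (hzb P hbP hyP hzP)))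
  refine ⟨z, hz, n, hn, fun P hP => ?_, hzb⟩
  have hPy : P.asIdeal ∈ associatedPrimes R (R ⧸ (a ⊔ Ideal.span {y})) :=
    associatedPrimes_quotient_sup_span_pow_subset hya (n + 1)
      (associatedPrimes_quotient_saturation_subset _ z hP)
  refine le_antisymm (hby P <| (sup_le_sup_right hba _).trans
    (le_of_mem_associatedPrimes_quotient hPy)) (Order.add_one_le_of_lt ?_)
  by_contra! hPe
  exact isSMulRegular_iff_forall_notMem_associatedPrimes.1 (isSMulRegular_quotient_saturation _ z)
    _ hP (hzS P ⟨hPy, hPe⟩)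

theorem exists_limitIdeal_le [IsPrecomplete (maximalIdeal R) R] {K : Ideal R}
    (hK : maximalIdeal R ≤ K.radical) (e : ℕ) {a b : Ideal R} {y : R} (hy : y ∈ maximalIdeal R)
    (hba : b ≤ a) (haK : saturation a y ≤ K)
    (ha : ∀ P : PrimeSpectrum R, P.asIdeal ∈ associatedPrimes R (R ⧸ saturation a y) →
      coheight P = e + 1)
    (hb : ∀ P : PrimeSpectrum R, b ≤ P.asIdeal → y ∈ P.asIdeal → coheight P ≤ e) :
    ∃ xs : List R, xs.length = e + 1 ∧ limitIdeal xs a ≤ K ∧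
      ∀ P : PrimeSpectrum R, b ≤ P.asIdeal → (∀ x ∈ xs, x ∈ P.asIdeal) → P = closedPoint R := by
  induction e generalizing a b y with
  | zero =>
    obtain ⟨k, hk⟩ := hK hy
    refine ⟨[y ^ (k + 1)], rfl, ?_, fun P hbP hyP => ?_⟩
    · rw [limitIdeal, limitIdeal, saturation_pow a y k.succ_ne_zero, pow_succ]
      exact sup_le haK ((Ideal.span_singleton_le_iff_mem K).2 (K.mul_mem_right y hk))
    · exact eq_closedPoint_of_coheight_eq_zero <| le_antisymm
        (hb P hbP (P.isPrime.mem_of_pow_mem _ (hyP _ (List.mem_singleton_self _)))) zero_le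
  | succ e ih =>
    have hbA : b ≤ saturation a y := hba.trans (le_saturation a y)
    obtain ⟨z, hz, n, hnK, hAss, hzb⟩ :=
      exists_next_parameter hy (isSMulRegular_quotient_saturation a y) hbA haK hK ha hb
    have hyP (P : PrimeSpectrum R) (hP : b ⊔ Ideal.span {y ^ (n + 1)} ≤ P.asIdeal) :
        y ∈ P.asIdeal :=
      P.isPrime.mem_of_pow_mem (n + 1)
        ((Ideal.span_singleton_le_iff_mem _).1 (le_sup_right.trans hP))
    obtain ⟨xs, hlen, hxsK, hxs⟩ := ih hz (sup_le_sup_right hbA _) hnK hAss fun P hP =>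
      hzb P (le_sup_left.trans hP) (hyP P hP)
    refine ⟨y ^ (n + 1) :: xs, by rw [List.length_cons, hlen], ?_, fun P hbP hP => ?_⟩
    · rwa [limitIdeal, saturation_pow a y n.succ_ne_zero]
    · rw [List.forall_mem_cons] at hP
      exact hxs P (sup_le hbP ((Ideal.span_singleton_le_iff_mem _).2 hP.1)) hP.2

theorem exists_limitIdeal_bot_le [IsPrecomplete (maximalIdeal R) R] {d : ℕ}
    (hd : ringKrullDim R = d) (hunm : ∀ P ∈ associatedPrimes R R, ringKrullDim (R ⧸ P) = d)
    {K : Ideal R} (hK : maximalIdeal R ≤ K.radical) :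
    ∃ xs : List R, xs.length = d ∧ limitIdeal xs ⊥ ≤ K ∧
      ∀ P : PrimeSpectrum R, (∀ x ∈ xs, x ∈ P.asIdeal) → P = closedPoint R := by
  have hle (P : PrimeSpectrum R) : coheight P ≤ d :=
    WithBot.coe_le_coe.1 <| (Order.coheight_le_krullDim P).trans_eq hd
  have hAss (P : PrimeSpectrum R)
      (hP : P.asIdeal ∈ associatedPrimes R (R ⧸ (⊥ : Ideal R))) : coheight P = d := by
    rw [LinearEquiv.AssociatedPrimes.eq (Submodule.quotEquivOfEqBot ⊥ rfl)] at hP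
    exact WithBot.coe_injective <| (ringKrullDim_quotient_asIdeal P).symm.trans (hunm _ hP)
  cases d with
  | zero =>
    exact ⟨[], rfl, bot_le, fun P _ =>
      eq_closedPoint_of_coheight_eq_zero (le_antisymm (hle P) zero_le)⟩
  | succ e =>
    obtain ⟨y, hy, -, hyP_le⟩ := exists_mem_maximalIdeal_forall_coheight_le (b := ⊥)
      (fun P _ => hle P) Set.finite_empty fun _ h => h.elim
    have hy_reg : IsSMulRegular (R ⧸ (⊥ : Ideal R)) y :=
      isSMulRegular_iff_forall_notMem_associatedPrimes.2 fun P hP hyP => by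
        have h := hyP_le ⟨P, hP.isPrime⟩ bot_le hyP
        rw [hAss _ hP] at h
        exact (Nat.lt_succ_self e).not_ge (Nat.cast_le.1 h)
    have hsat : saturation (⊥ : Ideal R) y = ⊥ := saturation_eq_self hy_reg
    obtain ⟨xs, hlen, hxsK, hxs⟩ := exists_limitIdeal_le hK e hy (le_refl (⊥ : Ideal R))
      (hsat.trans_le bot_le) (by rwa [hsat]) hyP_le
    exact ⟨xs, hlen, hxsK, fun P => hxs P bot_le⟩

end Parameters

/-! ### Hilbert–Kunz functions -/

section HilbertKunz

theorem radical_le_radical_bracketPow {R : Type*} [CommRing R] (I : Ideal R) (q : ℕ) :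
    I.radical ≤ (I.bracketPow q).radical := by
  rintro x ⟨n, hn⟩
  exact ⟨n * q, pow_mul x n q ▸ Ideal.subset_span (Set.mem_image_of_mem _ hn)⟩

/-- The Hilbert–Kunz function `e ↦ ℓ(R / I^{[p^e]})` of an ideal primary to the maximal ideal; it
is `0` at `e` if that length is infinite. -/
noncomputable def hilbertKunzFunction {R : Type*} [CommRing R] (p : ℕ) (I : Ideal R) (e : ℕ) : ℕ :=
  (colength (I.bracketPow (p ^ e))).toNat

theorem coe_hilbertKunzFunction {R : Type*} [CommRing R] [IsLocalRing R] [IsNoetherianRing R]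
    (p : ℕ) {I : Ideal R} (hI : maximalIdeal R ≤ I.radical) (e : ℕ) :
    (hilbertKunzFunction p I e : ℕ∞) = colength (I.bracketPow (p ^ e)) :=
  ENat.natCast_toNat (colength_ne_top (hI.trans (radical_le_radical_bracketPow I _)))

variable {R : Type*} [CommRing R] (p : ℕ) [ExpChar R p]

theorem bracketPow_eq_map (I : Ideal R) (e : ℕ) :
    I.bracketPow (p ^ e) = I.map (iterateFrobenius R p e) :=
  congrArg Ideal.span <| Set.image_congr fun x _ => (iterateFrobenius_def p e x).symm

theorem bracketPow_bracketPow (I : Ideal R) (m n : ℕ) :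
    (I.bracketPow (p ^ m)).bracketPow (p ^ n) = I.bracketPow (p ^ (n + m)) := by
  simp only [bracketPow_eq_map, Ideal.map_map, iterateFrobenius_add]

theorem bracketPow_pow (I : Ideal R) (n e : ℕ) :
    (I ^ n).bracketPow (p ^ e) = I.bracketPow (p ^ e) ^ n := by
  simp only [bracketPow_eq_map, Ideal.map_pow]

theorem bracketPow_span_range {ι : Type*} (x : ι → R) (e : ℕ) :
    (Ideal.span (Set.range x)).bracketPow (p ^ e) =
      Ideal.span (Set.range fun i => x i ^ p ^ e) := by
  rw [bracketPow_eq_map, Ideal.map_span, ← Set.range_comp]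
  exact congrArg (Ideal.span <| Set.range ·) (funext fun i => iterateFrobenius_def p e (x i))

theorem hilbertKunzFunction_bracketPow (I : Ideal R) (m n : ℕ) :
    hilbertKunzFunction p (I.bracketPow (p ^ m)) n = hilbertKunzFunction p I (n + m) := by
  rw [hilbertKunzFunction, bracketPow_bracketPow, hilbertKunzFunction]

variable [IsLocalRing R] [IsNoetherianRing R]

theorem hilbertKunzFunction_add_le {I K : Ideal R} (hI : maximalIdeal R ≤ I.radical) (hIK : I ≤ K)
    (e : ℕ) :
    hilbertKunzFunction p I e + (colength K).toNat * hilbertKunzFunction p (maximalIdeal R) e ≤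
      hilbertKunzFunction p K e +
        (colength I).toNat * hilbertKunzFunction p (maximalIdeal R) e := by
  have hK := hI.trans (Ideal.radical_mono hIK)
  have h := colength_map_add_le (iterateFrobenius R p e) hI hIK
  simp only [← bracketPow_eq_map, ← coe_hilbertKunzFunction p hI, ← coe_hilbertKunzFunction p hK,
    ← coe_hilbertKunzFunction p Ideal.le_radical] at h
  rw [← ENat.natCast_toNat (colength_ne_top hI), ← ENat.natCast_toNat (colength_ne_top hK)] at h
  exact_mod_cast h

theorem hilbertKunzFunction_le {I : Ideal R} (hI : maximalIdeal R ≤ I.radical) (e : ℕ) :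
    hilbertKunzFunction p I e ≤
      (colength I).toNat * hilbertKunzFunction p (maximalIdeal R) e := by
  have h := colength_map_le (iterateFrobenius R p e) hI
  rw [← bracketPow_eq_map, ← bracketPow_eq_map, ← coe_hilbertKunzFunction p hI,
    ← coe_hilbertKunzFunction p Ideal.le_radical, ← ENat.natCast_toNat (colength_ne_top hI)] at h
  exact_mod_cast h

-- `I` has the least growth that is possible and `K` is reached from it in `ℓ(K / I)` steps, so
-- the growth of `K` cannot fall short of `ℓ(R / K)` unless some step costs more than `R / m`.
theorem tendsto_hilbertKunzFunction {I K : Ideal R} {d : ℕ} (hI : maximalIdeal R ≤ I.radical)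
    (hIK : I ≤ K) (hle : ∀ e, p ^ (e * d) * (colength I).toNat ≤ hilbertKunzFunction p I e)
    (hm : Tendsto (fun e => hilbertKunzFunction p (maximalIdeal R) e / (p : ℝ) ^ (e * d)) atTop
      (𝓝 1)) :
    Tendsto (fun e => hilbertKunzFunction p K e / (p : ℝ) ^ (e * d)) atTop
      (𝓝 (colength K).toNat) := by
  set h := hilbertKunzFunction p (R := R)
  set ℓI := (colength I).toNat
  set ℓK := (colength K).toNat
  have hpos (e : ℕ) : (0 : ℝ) < (p : ℝ) ^ (e * d) := by
    have := expChar_pos R p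
    positivity
  have lower : Tendsto (fun e => (ℓI + (ℓK - ℓI) * (h (maximalIdeal R) e / p ^ (e * d)) : ℝ)) atTop
      (𝓝 ℓK) := by
    simpa using (hm.const_mul (ℓK - ℓI : ℝ)).const_add (ℓI : ℝ)
  have upper : Tendsto (fun e => (ℓK * (h (maximalIdeal R) e / p ^ (e * d)) : ℝ)) atTop (𝓝 ℓK) := by
    simpa using hm.const_mul (ℓK : ℝ)
  refine tendsto_of_tendsto_of_tendsto_of_le_of_le lower upper (fun e => ?_) (fun e => ?_)
  · have h₁ : (p ^ (e * d) * ℓI : ℝ) ≤ h I e := by exact_mod_cast hle e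
    have h₂ : (h I e + ℓK * h (maximalIdeal R) e : ℝ) ≤ h K e + ℓI * h (maximalIdeal R) e := by
      exact_mod_cast hilbertKunzFunction_add_le p hI hIK e
    rw [le_div_iff₀ (hpos e), add_mul, mul_assoc, div_mul_cancel₀ _ (hpos e).ne']
    linarith
  · have h₁ : (h K e : ℝ) ≤ ℓK * h (maximalIdeal R) e := by
      exact_mod_cast hilbertKunzFunction_le p (hI.trans (Ideal.radical_mono hIK)) e
    rw [← mul_div_assoc]
    exact div_le_div_of_nonneg_right h₁ (hpos e).le

end HilbertKunz

section UnmixedComplete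

variable {R : Type*} [CommRing R] [IsLocalRing R] [IsNoetherianRing R]

theorem exists_le_pow_mul_colength_le_hilbertKunzFunction [IsPrecomplete (maximalIdeal R) R]
    {d : ℕ} (hd : ringKrullDim R = d)
    (hunm : ∀ P ∈ associatedPrimes R R, ringKrullDim (R ⧸ P) = d) (p : ℕ) [ExpChar R p]
    {K : Ideal R} (hK : maximalIdeal R ≤ K.radical) :
    ∃ I ≤ K, maximalIdeal R ≤ I.radical ∧
      ∀ e, p ^ (e * d) * (colength I).toNat ≤ hilbertKunzFunction p I e := by
  obtain ⟨xs, rfl, hxsK, hxs⟩ := exists_limitIdeal_bot_le hd hunm hK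
  have hprime (P : Ideal R) (hP : P.IsPrime) (hxsP : ∀ x ∈ xs, x ∈ P) : P = maximalIdeal R :=
    congrArg PrimeSpectrum.asIdeal (hxs ⟨P, hP⟩ hxsP)
  refine ⟨limitIdeal xs ⊥, hxsK, ?_, fun e => ?_⟩
  · rw [Ideal.radical_eq_sInf]
    exact le_sInf fun P ⟨hP, hPprime⟩ =>
      (hprime P hPprime fun x hx => hP (mem_limitIdeal hx ⊥)).ge
  · have hsys : IsMultiplicitySystem xs (R ⧸ (⊥ : Ideal R)) := fun P hP hxsP _ =>
      hprime P hP hxsP ▸ maximalIdeal.isMaximal R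
    rw [pow_mul, hilbertKunzFunction, bracketPow_eq_map]
    exact pow_mul_colength_limitIdeal_le hsys _ (pow_ne_zero e (expChar_ne_zero R p))
      fun x _ => iterateFrobenius_def p e x

theorem colength_bracketPow_eq [IsPrecomplete (maximalIdeal R) R]
    {d : ℕ} (hd : ringKrullDim R = d)
    (hunm : ∀ P ∈ associatedPrimes R R, ringKrullDim (R ⧸ P) = d) (p : ℕ) [ExpChar R p]
    (hm : Tendsto (fun e => hilbertKunzFunction p (maximalIdeal R) e / (p : ℝ) ^ (e * d)) atTop
      (𝓝 1)) {K : Ideal R} (hK : maximalIdeal R ≤ K.radical) :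
    colength (K.bracketPow p) = (p ^ d : ℕ) * colength K := by
  have htendsto {K : Ideal R} (hK : maximalIdeal R ≤ K.radical) :
      Tendsto (fun e => hilbertKunzFunction p K e / (p : ℝ) ^ (e * d)) atTop
        (𝓝 (colength K).toNat) := by
    obtain ⟨I, hIK, hI, hle⟩ :=
      exists_le_pow_mul_colength_le_hilbertKunzFunction hd hunm p hK
    exact tendsto_hilbertKunzFunction p hI hIK hle hm
  have hKp : maximalIdeal R ≤ (K.bracketPow p).radical :=
    hK.trans (radical_le_radical_bracketPow K p)
  have hp : (p : ℝ) ≠ 0 := Nat.cast_ne_zero.2 (expChar_ne_zero R p)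
  have hshift (e : ℕ) : hilbertKunzFunction p (K.bracketPow p) e / (p : ℝ) ^ (e * d) =
      p ^ d * (hilbertKunzFunction p K (e + 1) / (p : ℝ) ^ ((e + 1) * d)) := by
    have h := hilbertKunzFunction_bracketPow p K 1 e
    rw [pow_one] at h
    rw [h, add_mul, one_mul, pow_add]
    field_simp
  have h := tendsto_nhds_unique ((htendsto hKp).congr hshift)
    (((htendsto hK).comp (tendsto_add_atTop_nat 1)).const_mul _)
  rw [← ENat.natCast_toNat (colength_ne_top hKp), ← ENat.natCast_toNat (colength_ne_top hK)]
  exact_mod_cast h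

end UnmixedComplete

section Regular

variable {R : Type*} [CommRing R] [IsLocalRing R] [IsNoetherianRing R]

theorem spanFinrank_maximalIdeal_le_of_colength_bracketPow (p : ℕ) [Fact p.Prime] [CharP R p]
    {d : ℕ} (hm : colength ((maximalIdeal R).bracketPow p) = (p ^ d : ℕ))
    (hm_sq : colength ((maximalIdeal R ^ 2).bracketPow p) =
      (p ^ d : ℕ) * colength (maximalIdeal R ^ 2)) :
    (maximalIdeal R).spanFinrank ≤ d := by
  obtain ⟨s, hcard, hs⟩ := Submodule.FG.exists_span_finset_card_eq_spanFinrank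
    (IsNoetherian.noetherian (maximalIdeal R))
  let x : s → R := Subtype.val
  have hx : Ideal.span (Set.range x) = maximalIdeal R := by rw [Subtype.range_coe]; exact hs
  have hQ : Ideal.span (Set.range fun i => x i ^ p) = (maximalIdeal R).bracketPow p := by
    simpa only [pow_one, hx] using (bracketPow_span_range p x 1).symm
  have hlech : IsLechIndependent fun i => x i ^ p := by
    refine isLechIndependent_of_le_colength_sq hQ (hm ▸ ENat.natCast_ne_top _) (le_of_eq ?_)
    have hpow := bracketPow_pow p (maximalIdeal R) 2 1
    rw [pow_one] at hpow
    rw [← hpow, hm_sq, hm, colength_maximalIdeal_sq, Fintype.card_coe, hcard, mul_comm]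
  have h := hlech.colength_span_range_pow x (fun _ => p) fun _ => NeZero.ne p
  rw [hQ, hx, hm, colength_maximalIdeal, mul_one, Finset.prod_const, Finset.card_univ,
    Fintype.card_coe, hcard, Nat.cast_inj] at h
  exact (Nat.pow_right_injective (Fact.out : p.Prime).two_le h).ge

theorem isRegularLocal_of_spanFinrank_le {d : ℕ} (hd : ringKrullDim R = d)
    (h : (maximalIdeal R).spanFinrank ≤ d) : IsRegularLocal R := by
  have hle : (d : WithBot ℕ∞) ≤ (maximalIdeal R).spanFinrank :=
    hd ▸ ringKrullDim_le_spanFinrank_maximalIdeal R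
  have heq : (maximalIdeal R).spanFinrank = d := h.antisymm (by exact_mod_cast hle)
  obtain ⟨s, hcard, hs⟩ := Submodule.FG.exists_span_finset_card_eq_spanFinrank
    (IsNoetherian.noetherian (maximalIdeal R))
  let e := s.equivFinOfCardEq (hcard.trans heq)
  refine ⟨inferInstance, d, Subtype.val ∘ e.symm, hd, ?_⟩
  rw [e.symm.surjective.range_comp, Subtype.range_coe]
  exact hs.symm

theorem hilbertKunzFunction_maximalIdeal_eq [IsPrecomplete (maximalIdeal R) R]
    {d : ℕ} (hd : ringKrullDim R = d)
    (hunm : ∀ P ∈ associatedPrimes R R, ringKrullDim (R ⧸ P) = d) (p : ℕ) [ExpChar R p]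
    (x : Fin d → R) (hx : Ideal.span (Set.range x) = maximalIdeal R) (e : ℕ) :
    hilbertKunzFunction p (maximalIdeal R) e = p ^ (e * d) := by
  refine le_antisymm ?_ ?_
  · have h := colength_span_range_pow_le x fun _ => p ^ e
    rw [← bracketPow_span_range, hx, ← coe_hilbertKunzFunction p Ideal.le_radical,
      colength_maximalIdeal, mul_one, Finset.prod_const, Finset.card_univ, Fintype.card_fin,
      ← pow_mul] at h
    exact Nat.cast_le.1 h
  · obtain ⟨I, hIm, hI, hle⟩ := exists_le_pow_mul_colength_le_hilbertKunzFunction hd hunm p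
      (Ideal.le_radical (I := maximalIdeal R))
    have hpos : 0 < (colength I).toNat := by
      rw [← Nat.cast_pos (α := ℕ∞), ENat.natCast_toNat (colength_ne_top hI)]
      calc (0 : ℕ∞) < 1 := one_pos
        _ = colength (maximalIdeal R) := colength_maximalIdeal.symm
        _ ≤ colength I := colength_antitone hIm
    refine Nat.le_of_mul_le_mul_left ?_ hpos
    rw [mul_comm]
    exact (hle e).trans (hilbertKunzFunction_le p hI e)

end Regular

/-- **Watanabe–Yoshida, Huneke–Yao.** A `d`-dimensional complete unmixed Noetherian local
ring of characteristic `p` is regular if and only if `e_HK(A) = 1`. -/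
theorem regular_iff_hilbert_kunz_one (A : Type*) [CommRing A] [IsLocalRing A]
    [IsNoetherianRing A] (p : ℕ) [Fact p.Prime] [CharP A p]
    (hcomp : IsAdicComplete (IsLocalRing.maximalIdeal A) A)
    (d : ℕ) (hd : ringKrullDim A = d)
    (hunmixed : ∀ P ∈ associatedPrimes A A, ringKrullDim (A ⧸ P) = d)
    (L : ℝ)
    (hL : Filter.Tendsto
      (fun e : ℕ =>
        ((moduleLength A (A ⧸ (IsLocalRing.maximalIdeal A).bracketPow (p ^ e))).toNat : ℝ) /
          (p : ℝ) ^ (e * d))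
      Filter.atTop (nhds L)) :
    IsRegularLocal A ↔ L = 1 := by
  have hlen (I : Ideal A) : moduleLength A (A ⧸ I) = colength I :=
    (Module.length_eq_height A (A ⧸ I)).symm
  replace hL : Tendsto (fun e => hilbertKunzFunction p (maximalIdeal A) e / (p : ℝ) ^ (e * d))
      atTop (𝓝 L) := by
    simpa only [hlen, hilbertKunzFunction] using hL
  constructor
  · rintro ⟨-, d', x, hd', hx⟩
    obtain rfl : d = d' := by exact_mod_cast hd.symm.trans hd'
    refine tendsto_nhds_unique hL (tendsto_const_nhds.congr fun e => ?_)
    have hp : (p : ℝ) ≠ 0 := NeZero.ne _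
    rw [hilbertKunzFunction_maximalIdeal_eq hd hunmixed p x hx.symm, Nat.cast_pow,
      div_self (pow_ne_zero _ hp)]
  · rintro rfl
    have hm := colength_bracketPow_eq hd hunmixed p hL (Ideal.le_radical (I := maximalIdeal A))
    have hm_sq := colength_bracketPow_eq hd hunmixed p hL (K := maximalIdeal A ^ 2)
      ((maximalIdeal A).radical_pow two_ne_zero ▸ Ideal.le_radical)
    rw [colength_maximalIdeal, mul_one] at hm
    exact isRegularLocal_of_spanFinrank_le hd
      (spanFinrank_maximalIdeal_le_of_colength_bracketPow p hm hm_sq)
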